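/- Suppose C ⊆ (Fin 5)^8 is a code with minimum Hamming distance at least 6 and |C| = 65. Then for every coordinate j ∈ {1, …, 8} and every symbol α ∈ Fin 5, exactly 13 words of C have symbol α in coordinate j. Consequently, A_5(8,6) ≤ 65: every code C ⊆ (Fin 5)^8 with minimum Hamming distance at least 6 has at most 65 elements. -/

import Mathlib

/-!
Let `C` be a 65-word code and consider the words with a given symbol in a given coordinate. Any two
of them agree in at most one of the other seven coordinates, and counting agreements there shows
that there are at most 15 such words. If there are 15, or 14 together with one missing word, then
they form a Kirkman triple system: words are points, the other coordinates are days and their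
symbols are blocks. Every remaining word of `C` agrees at most twice with each of these points, 21
times in total.

Such words are scarce. A Gauss sum modulo 5 produces a nonempty set of 8 points that meets every
block evenly; its complement is a Fano plane. By parity, a word agrees an odd number of times with
some point `p` of the plane. Around `p` the Kirkman system can be brought to a normal form in which
an exhaustive search finds at most 8 words agreeing zero or two times with all points other than
`p`, and at most 3 of those agree exactly once with `p`. Hence a block of 15 or 14 words forces many
pairs of words of `C` that agree exactly once. The same agreement count bounds the number of such
pairs from above, and comparing the two excludes first blocks of 15 words and then blocks of 14, so
that all blocks have 13 words. With 66 words, deleting either one of two words that differ in some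
coordinate would leave 13 words in every block, which is absurd.
-/

open Finset

namespace KirkmanCode

/-! ### Agreements -/

section Agreements

variable {ι α P : Type*} [Fintype ι] [DecidableEq α]

/-- The number of coordinates in which `u` and `v` agree. -/
def agree (u v : ι → α) : ℕ := #{i | u i = v i}

theorem agree_comm (u v : ι → α) : agree u v = agree v u := by
  simp only [agree, eq_comm]

theorem agree_self (u : ι → α) : agree u u = Fintype.card ι := by
  simp [agree]

theorem sum_sq_card_fiber [Fintype α] (x : P → ι → α) (A : Finset P) :
    ∑ i, ∑ γ, #{a ∈ A | x a i = γ} ^ 2 = ∑ a ∈ A, ∑ b ∈ A, agree (x a) (x b) := by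
  have hcoord (i : ι) : ∑ γ, #{a ∈ A | x a i = γ} ^ 2 = ∑ a ∈ A, #{b ∈ A | x a i = x b i} := by
    rw [← sum_fiberwise A (fun a => x a i) fun a => #{b ∈ A | x a i = x b i}]
    refine sum_congr rfl fun γ _ => ?_
    rw [sq, ← smul_eq_mul, ← sum_const]
    refine sum_congr rfl fun a ha => ?_
    simp only [(mem_filter.1 ha).2, eq_comm]
  rw [sum_congr rfl fun i _ => hcoord i, sum_comm]
  simp only [agree, card_filter]
  exact sum_congr rfl fun a _ => sum_comm

end Agreements

/-! ### Kirkman triple systems -/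

/-- A resolved Steiner triple system on the point set `P`: seven days, on each of which the points
are partitioned into five blocks of size 3, such that any two points share a block on exactly one
day; `x p d` is the index of the block of `p` on day `d`. -/
structure IsKirkman {P : Type*} [Fintype P] (x : P → Fin 7 → Fin 5) : Prop where
  card_block : ∀ d γ, #{p | x p d = γ} = 3
  agree_eq_one : ∀ p q, p ≠ q → agree (x p) (x q) = 1

section Kirkman

variable {P : Type*} [Fintype P] {x : P → Fin 7 → Fin 5}

theorem IsKirkman.card_points (hx : IsKirkman x) : Fintype.card P = 15 := by
  rw [← card_univ, card_eq_sum_card_fiberwise (f := fun p => x p 0) (t := univ) (by simp)]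
  simp only [hx.card_block]
  rfl

theorem IsKirkman.day_unique (hx : IsKirkman x) {p q : P} (hpq : p ≠ q) {d d' : Fin 7}
    (hd : x p d = x q d) (hd' : x p d' = x q d') : d = d' :=
  card_le_one.1 (hx.agree_eq_one p q hpq).le d (by simpa using hd) d' (by simpa using hd')

theorem IsKirkman.exists_day (hx : IsKirkman x) {p q : P} (hpq : p ≠ q) : ∃ d, x p d = x q d := by
  obtain ⟨d, hd⟩ := card_eq_one.1 (hx.agree_eq_one p q hpq)
  exact ⟨d, by simpa using (Finset.ext_iff.1 hd d).2 (mem_singleton_self d)⟩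

theorem IsKirkman.sum_agree (hx : IsKirkman x) (u : Fin 7 → Fin 5) :
    ∑ p, agree (x p) u = 21 := by
  simp only [agree, card_filter]
  rw [sum_comm]
  simp only [← card_filter, hx.card_block]
  rfl

theorem IsKirkman.sum_sq_card_fiber (hx : IsKirkman x) (A : Finset P) :
    ∑ d, ∑ γ, #{a ∈ A | x a d = γ} ^ 2 = #A ^ 2 + 6 * #A := by
  classical
  have hrow (a : P) (ha : a ∈ A) : ∑ b ∈ A, agree (x a) (x b) = #A + 6 := by
    rw [← add_sum_erase A _ ha, agree_self, Fintype.card_fin,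
      sum_congr rfl fun b hb => hx.agree_eq_one a b (ne_of_mem_erase hb).symm, sum_const,
      smul_eq_mul, mul_one, card_erase_of_mem ha]
    have := card_pos.2 ⟨a, ha⟩
    omega
  rw [KirkmanCode.sum_sq_card_fiber, sum_congr rfl hrow, sum_const, smul_eq_mul]
  ring

end Kirkman

/-! ### Even sets, by a Gauss sum -/

section EvenSets

/-- The even subsets of `Fin 5`, which form `𝔽₂⁴` under symmetric difference. -/
def evenSets : Finset (Finset (Fin 5)) := {S | Even #S}

/-- The sign `(-1) ^ q S` of the quadratic form `q S = #S / 2` on the even subsets of `Fin 5`. -/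
def quadSign (S : Finset (Fin 5)) : ℤ := (-1) ^ (#S / 2)

/-- The form is elliptic, whence the negative Gauss sum. -/
theorem sum_quadSign : ∀ S ∈ evenSets,
    ∑ y ∈ evenSets, quadSign y * (-1) ^ #(y ∩ S) = -4 * quadSign S := by
  decide +kernel

theorem sum_neg_one_pow_card_inter : ∀ S ∈ evenSets,
    ∑ y ∈ evenSets, (-1 : ℤ) ^ #(y ∩ S) = if S = ∅ then 16 else 0 := by
  decide +kernel

variable {P : Type*} {x : P → Fin 7 → Fin 5}

/-- The blocks of day `d` that meet `A` in an odd number of points. -/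
def oddBlocks (x : P → Fin 7 → Fin 5) (A : Finset P) (d : Fin 7) : Finset (Fin 5) :=
  {γ | Odd #{a ∈ A | x a d = γ}}

/-- The character of the subsets of `P` given by pairing with the blocks in `y`, at the singleton
`{a}`. -/
def pointSign (x : P → Fin 7 → Fin 5) (y : Fin 7 → Finset (Fin 5)) (a : P) : ℤ :=
  (-1) ^ #{d | x a d ∈ y d}

theorem prod_pointSign (y : Fin 7 → Finset (Fin 5)) (A : Finset P) :
    ∏ a ∈ A, pointSign x y a = ∏ d, (-1) ^ #(y d ∩ oddBlocks x A d) := by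
  have hfiber (d : Fin 7) :
      #{a ∈ A | x a d ∈ y d} = ∑ γ ∈ y d, #{a ∈ A | x a d = γ} := by
    simp only [card_filter]
    rw [sum_comm]
    exact sum_congr rfl fun a _ => (sum_ite_eq (y d) (x a d) fun _ => 1).symm
  have hparity (d : Fin 7) : Even #{a ∈ A | x a d ∈ y d} ↔ Even #(y d ∩ oddBlocks x A d) := by
    rw [hfiber, even_sum_iff_even_card_odd, oddBlocks, inter_filter, inter_univ]
  simp only [← fun d => neg_one_pow_congr (R := ℤ) (hparity d), pointSign, prod_pow_eq_pow_sum,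
    card_filter]
  rw [sum_comm]

theorem oddBlocks_mem_evenSets {A : Finset P} (hA : Even #A) (d : Fin 7) :
    oddBlocks x A d ∈ evenSets := by
  rw [card_eq_sum_card_fiberwise (f := fun a => x a d) (t := univ) (by simp),
    even_sum_iff_even_card_odd] at hA
  exact mem_filter.2 ⟨mem_univ _, hA⟩

theorem card_oddBlocks_mod_four (A : Finset P) (d : Fin 7) :
    #(oddBlocks x A d) ≡ ∑ γ, #{a ∈ A | x a d = γ} ^ 2 [MOD 4] := by
  have hsq (n : ℕ) : (if Odd n then 1 else 0) ≡ n ^ 2 [MOD 4] := by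
    rcases Nat.even_or_odd' n with ⟨k, rfl | rfl⟩
    · rw [if_neg (by simp), Nat.modEq_iff_dvd]
      exact ⟨k ^ 2, by push_cast; ring⟩
    · rw [if_pos (by simp), Nat.modEq_iff_dvd]
      exact ⟨k ^ 2 + k, by push_cast; ring⟩
  rw [oddBlocks, card_filter]
  exact Nat.ModEq.sum fun γ _ => hsq _

theorem sum_prod_pointSign {A : Finset P} (hA : Even #A) :
    ∑ y ∈ Fintype.piFinset fun _ => evenSets, ∏ a ∈ A, pointSign x y a =
      if ∀ d, oddBlocks x A d = ∅ then 16 ^ 7 else 0 := by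
  simp only [prod_pointSign]
  rw [← prod_univ_sum (fun _ => evenSets) fun d y => (-1 : ℤ) ^ #(y ∩ oddBlocks x A d),
    prod_congr rfl fun d _ => sum_neg_one_pow_card_inter _ (oddBlocks_mem_evenSets hA d)]
  split_ifs with h
  · simp [h]
  · obtain ⟨d, hd⟩ := not_forall.1 h
    exact prod_eq_zero (mem_univ d) (if_neg hd)

variable [Fintype P]

theorem IsKirkman.prod_quadSign_oddBlocks (hx : IsKirkman x) {A : Finset P} (hA : Even #A) :
    ∏ d, quadSign (oddBlocks x A d) = 1 := by
  have hhalf (d : Fin 7) : 2 * (#(oddBlocks x A d) / 2) = #(oddBlocks x A d) :=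
    Nat.two_mul_div_two_of_even (mem_filter.1 (oddBlocks_mem_evenSets hA d)).2
  have hmod : 2 * ∑ d, #(oddBlocks x A d) / 2 ≡ 0 [MOD 4] := by
    rw [mul_sum, sum_congr rfl fun d _ => hhalf d]
    refine (Nat.ModEq.sum fun d _ => card_oddBlocks_mod_four A d).trans ?_
    rw [hx.sum_sq_card_fiber]
    obtain ⟨m, hm⟩ := hA
    exact Nat.modEq_zero_iff_dvd.2 ⟨m ^ 2 + 3 * m, by rw [hm]; ring⟩
  simp only [quadSign]
  rw [prod_pow_eq_pow_sum]
  refine Even.neg_one_pow (even_iff_two_dvd.2 ?_)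
  exact Nat.dvd_of_mul_dvd_mul_left two_pos (Nat.modEq_zero_iff_dvd.1 hmod)

theorem IsKirkman.sum_quadSign_mul_prod_pointSign (hx : IsKirkman x) {A : Finset P}
    (hA : Even #A) :
    ∑ y ∈ Fintype.piFinset fun _ => evenSets,
      (∏ d, quadSign (y d)) * ∏ a ∈ A, pointSign x y a = (-4) ^ 7 := by
  simp only [prod_pointSign, ← prod_mul_distrib]
  rw [← prod_univ_sum (fun _ => evenSets) fun d y => quadSign y * (-1 : ℤ) ^ #(y ∩ oddBlocks x A d),
    prod_congr rfl fun d _ => sum_quadSign _ (oddBlocks_mem_evenSets hA d), prod_mul_distrib,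
    hx.prod_quadSign_oddBlocks hA]
  simp

/-- The sum over the even subsets of `P` of the character `∏ pointSign x y`. -/
def charSum (x : P → Fin 7 → Fin 5) (y : Fin 7 → Finset (Fin 5)) : ℤ :=
  ∑ A : Finset P with Even #A, ∏ a ∈ A, pointSign x y a

theorem two_mul_charSum (y : Fin 7 → Finset (Fin 5)) :
    2 * charSum x y = ∏ a, (1 + pointSign x y a) + ∏ a, (1 - pointSign x y a) := by
  classical
  simp only [charSum, sub_eq_add_neg]
  rw [prod_one_add, prod_one_add, ← sum_add_distrib, powerset_univ, sum_filter, mul_sum]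
  refine sum_congr rfl fun A _ => ?_
  rw [prod_neg]
  split_ifs with h
  · rw [h.neg_one_pow]
    ring
  · rw [(Nat.not_even_iff_odd.1 h).neg_one_pow]
    ring

theorem charSum_nonneg (y : Fin 7 → Finset (Fin 5)) : 0 ≤ charSum x y := by
  have hsign (a : P) : |pointSign x y a| = 1 := abs_neg_one_pow _
  have hplus : 0 ≤ ∏ a, (1 + pointSign x y a) :=
    prod_nonneg fun a _ => by linarith [neg_abs_le (pointSign x y a), hsign a]
  have hminus : 0 ≤ ∏ a, (1 - pointSign x y a) :=
    prod_nonneg fun a _ => by linarith [le_abs_self (pointSign x y a), hsign a]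
  linarith [two_mul_charSum (x := x) y]

theorem IsKirkman.charSum_empty (hx : IsKirkman x) : charSum x (fun _ => ∅) = 2 ^ 14 := by
  have h := two_mul_charSum (x := x) fun _ => ∅
  simp [pointSign, hx.card_points] at h
  linarith

theorem IsKirkman.card_even (hx : IsKirkman x) : #{A : Finset P | Even #A} = 2 ^ 14 := by
  have h := hx.charSum_empty
  simp only [charSum, pointSign, notMem_empty, filter_false, card_empty, pow_zero,
    prod_const_one, sum_const, nsmul_eq_mul, mul_one] at h
  exact_mod_cast h

/-- The sum of `(1 + ∏ quadSign (y d)) * charSum x y` over all `y` has nonnegative terms and is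
positive at `y = ∅`. If only `A = ∅` met every block evenly, it would be
`16 ^ 7 - 4 ^ 7 * 2 ^ 14 = 0`. -/
theorem IsKirkman.exists_even_set (hx : IsKirkman x) :
    ∃ A : Finset P, A.Nonempty ∧ ∀ d γ, Even #{a ∈ A | x a d = γ} := by
  classical
  by_contra! hno
  let Y := Fintype.piFinset fun _ : Fin 7 => evenSets
  have hodd (A : Finset P) : (∀ d, oddBlocks x A d = ∅) ↔ A = ∅ := by
    refine ⟨fun h => ?_, fun h d => by simp [h, oddBlocks]⟩
    by_contra hA
    obtain ⟨d, γ, hγ⟩ := hno A (nonempty_iff_ne_empty.2 hA)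
    exact filter_eq_empty_iff.1 (h d) (mem_univ γ) (Nat.not_even_iff_odd.1 hγ)
  have hsum : ∑ y ∈ Y, charSum x y = 16 ^ 7 := by
    simp only [charSum]
    rw [sum_comm, sum_congr rfl fun A hA => sum_prod_pointSign (mem_filter.1 hA).2,
      sum_congr rfl fun A _ => if_congr (hodd A) rfl rfl]
    simp
  have hgauss : ∑ y ∈ Y, (∏ d, quadSign (y d)) * charSum x y = 2 ^ 14 * (-4) ^ 7 := by
    simp only [charSum, mul_sum]
    rw [sum_comm, sum_congr rfl fun A hA => hx.sum_quadSign_mul_prod_pointSign (mem_filter.1 hA).2,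
      sum_const, hx.card_even]
    rfl
  have hnonneg : ∀ y ∈ Y, 0 ≤ (1 + ∏ d, quadSign (y d)) * charSum x y := fun y _ =>
    mul_nonneg (by
      have habs : |∏ d, quadSign (y d)| = 1 := by simp [abs_prod, quadSign]
      linarith [neg_abs_le (∏ d, quadSign (y d))]) (charSum_nonneg y)
  have hle := single_le_sum hnonneg (a := fun _ => ∅) (by simp [Y, evenSets])
  simp only [add_mul, one_mul, sum_add_distrib, hsum, hgauss, hx.charSum_empty] at hle
  simp [quadSign] at hle

end EvenSets

/-! ### Kirkman triple systems in normal form -/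

/-- Line `d` of the Fano plane on `Fin 7`. -/
def fanoLine (d : Fin 7) : Finset (Fin 7) := {d, d + 1, d + 3}

/-- The points of the subplane in the normal form. -/
def fano (f : Fin 7) : Fin 15 := Fin.castAdd 8 f

/-- The points off the subplane in the normal form. -/
def outer (z : Fin 8) : Fin 15 := Fin.natAdd 7 z

theorem outer_ne_fano : ∀ z f, outer z ≠ fano f := by decide

/-- Entries `(f, z, z')` prescribing the blocks `{fano f, outer z, outer z'}` of day 0 in the normal
form. -/
def dayZeroPairs : List (Fin 7 × Fin 8 × Fin 8) := [(2, 0, 1), (4, 2, 3), (5, 4, 5), (6, 6, 7)]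

/-- Entries `(z, z')` prescribing blocks `{fano 2, outer z, outer z'}` in the normal form. -/
def matchingPairs : List (Fin 8 × Fin 8) := [(3, 4), (5, 6), (7, 2)]

/-- A Kirkman triple system on 15 points in which the points `fano f` form a subplane, line
`fanoLine d` being a block of day `d`. -/
structure HasSubplane (x : Fin 15 → Fin 7 → Fin 5) : Prop extends IsKirkman x where
  line : ∀ d, ∀ f ∈ fanoLine d, x (fano f) d = x (fano d) d

/-- A Kirkman triple system in normal form: it has the subplane `fano`, and the other points are
labelled such that day 0 and the blocks through `fano 2` are as prescribed. -/
structure IsNormal (x : Fin 15 → Fin 7 → Fin 5) : Prop extends HasSubplane x where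
  day_zero : ∀ c ∈ dayZeroPairs,
    x (outer c.2.1) 0 = x (fano c.1) 0 ∧ x (outer c.2.2) 0 = x (fano c.1) 0
  matching : ∀ c ∈ matchingPairs,
    ∃ d, x (outer c.1) d = x (fano 2) d ∧ x (outer c.2) d = x (fano 2) d

section Subplane

variable {x : Fin 15 → Fin 7 → Fin 5}

theorem HasSubplane.fano_eq_iff (hx : HasSubplane x) {d f g : Fin 7} :
    x (fano f) d = x (fano g) d ↔ f = g ∨ f ∈ fanoLine d ∧ g ∈ fanoLine d := by
  constructor
  · intro h
    by_cases hfg : f = g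
    · exact Or.inl hfg
    · have hline : ∀ f g : Fin 7, ∃ d', f ∈ fanoLine d' ∧ g ∈ fanoLine d' := by decide
      obtain ⟨d', hf, hg⟩ := hline f g
      have hne : fano f ≠ fano g := fun he => hfg (Fin.castAdd_injective 7 8 he)
      rw [hx.day_unique hne h ((hx.line d' f hf).trans (hx.line d' g hg).symm)]
      exact Or.inr ⟨hf, hg⟩
  · rintro (rfl | ⟨hf, hg⟩)
    · rfl
    · exact (hx.line d f hf).trans (hx.line d g hg).symm

theorem HasSubplane.exists_fano (hx : HasSubplane x) (d : Fin 7) (γ : Fin 5) :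
    ∃ f, x (fano f) d = γ := by
  let reps : Fin 5 → Fin 7 := ![d, d + 2, d + 4, d + 5, d + 6]
  have hreps : ∀ d : Fin 7, ∀ i j : Fin 5, ![d, d + 2, d + 4, d + 5, d + 6] i ∈ fanoLine d →
      ![d, d + 2, d + 4, d + 5, d + 6] j ∈ fanoLine d → i = j := by decide
  have hinj' : ∀ d : Fin 7, Function.Injective ![d, d + 2, d + 4, d + 5, d + 6] := by decide
  have hinj : Function.Injective fun i => x (fano (reps i)) d := fun i j hij =>
    (hx.fano_eq_iff.1 hij).elim (fun h => hinj' d h) fun h => hreps d i j h.1 h.2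
  obtain ⟨i, hi⟩ := Finite.injective_iff_surjective.1 hinj γ
  exact ⟨_, hi⟩

theorem HasSubplane.card_fano_add_card_outer (hx : HasSubplane x) (d : Fin 7) (γ : Fin 5) :
    #{f | x (fano f) d = γ} + #{z | x (outer z) d = γ} = 3 := by
  simp only [← hx.card_block d γ, card_filter]
  exact (Fin.sum_univ_add (a := 7) (b := 8) fun p => if x p d = γ then 1 else 0).symm

theorem HasSubplane.outer_ne_line (hx : HasSubplane x) (d : Fin 7) (z : Fin 8) :
    x (outer z) d ≠ x (fano d) d := by
  have hline : fanoLine d ⊆ ({f | x (fano f) d = x (fano d) d} : Finset _) := fun f hf =>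
    mem_filter.2 ⟨mem_univ f, hx.line d f hf⟩
  have hcard : ∀ d, #(fanoLine d) = 3 := by decide
  have h := card_le_card hline
  rw [hcard, ← hx.card_fano_add_card_outer d (x (fano d) d)] at h
  have hzero := card_eq_zero.1 (Nat.le_zero.1 (le_of_add_le_add_left h))
  simpa using filter_eq_empty_iff.1 hzero (mem_univ z)

theorem HasSubplane.card_outer (hx : HasSubplane x) {d f : Fin 7} (hf : f ∉ fanoLine d) :
    #{z | x (outer z) d = x (fano f) d} = 2 := by
  have hsingle : ({g | x (fano g) d = x (fano f) d} : Finset (Fin 7)) = {f} := by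
    ext g
    simp [hx.fano_eq_iff, hf]
  have := hx.card_fano_add_card_outer d (x (fano f) d)
  rw [hsingle, card_singleton] at this
  omega

theorem HasSubplane.outer_mem_iff_of_matching (hx : HasSubplane x) {z z' : Fin 8}
    (h : ∃ d, x (outer z) d = x (fano 2) d ∧ x (outer z') d = x (fano 2) d) (d : Fin 7) :
    x (outer z) d = x (fano 2) d ↔ x (outer z') d = x (fano 2) d := by
  obtain ⟨d', hz, hz'⟩ := h
  constructor <;> intro hd
  · rwa [hx.day_unique (outer_ne_fano z 2) hd hz]
  · rwa [hx.day_unique (outer_ne_fano z' 2) hd hz']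

end Subplane

/-! ### Reaching the normal form -/

/-- A Steiner quasigroup: `t a b` is the third point on the line through `a` and `b`. -/
structure IsSteinerQuasigroup {P : Type*} (t : P → P → P) : Prop where
  idem : ∀ a, t a a = a
  comm : ∀ a b, t a b = t b a
  cancel : ∀ a b, t a (t a b) = b

/-- The points generated by `a`, `b` and `c` when they generate a Fano plane, numbered such that
line `d` is to be `{d, d + 1, d + 3}`. -/
def fanoPoints {P : Type*} (t : P → P → P) (a b c : P) : Fin 7 → P :=
  ![a, b, c, t a b, t b c, t c (t a b), t c a]

namespace IsSteinerQuasigroup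

variable {P : Type*} {t : P → P → P} {a b c : P}

theorem injective_fanoPoints (ht : IsSteinerQuasigroup t) (hb : b ≠ a) (hca : c ≠ a) (hcb : c ≠ b)
    (hc : c ≠ t a b) : Function.Injective (fanoPoints t a b c) := by
  obtain ⟨idem, comm, cancel⟩ := ht
  have hnodup : (List.ofFn (fanoPoints t a b c)).Nodup := by
    simp only [fanoPoints, List.ofFn_succ, List.ofFn_zero, Matrix.cons_val_zero,
      Matrix.cons_val_succ, List.nodup_cons, List.mem_cons, List.not_mem_nil, not_or, or_false,
      not_false_eq_true, List.nodup_nil, and_true]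
    refine ⟨?_, ?_, ?_, ?_, ?_, ?_⟩ <;> split_ands <;> grind
  exact List.nodup_ofFn.1 hnodup

theorem fanoPoints_third (ht : IsSteinerQuasigroup t) (hb : b ≠ a) (hca : c ≠ a) (hcb : c ≠ b)
    (hc : c ≠ t a b)
    (hclosed : ∀ f g, ∃ e, fanoPoints t a b c e = t (fanoPoints t a b c f) (fanoPoints t a b c g))
    (d : Fin 7) :
    t (fanoPoints t a b c d) (fanoPoints t a b c (d + 1)) = fanoPoints t a b c (d + 3) := by
  obtain ⟨idem, comm, cancel⟩ := ht
  have hvalue (f g : Fin 7) (u v : P) (hu : fanoPoints t a b c f = u)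
      (hv : fanoPoints t a b c g = v) :
      t u v = a ∨ t u v = b ∨ t u v = c ∨ t u v = t a b ∨ t u v = t b c ∨ t u v = t c (t a b) ∨
        t u v = t c a := by
    obtain ⟨e, he⟩ := hclosed f g
    rw [← hu, ← hv, ← he]
    fin_cases e <;> simp [fanoPoints]
  have h₃ : t (t a b) (t b c) = t c a := by
    have := hvalue 3 4 (t a b) (t b c) rfl rfl
    clear hclosed hvalue
    grind
  have h₄ : t (t b c) (t c (t a b)) = a := by
    have := hvalue 4 5 (t b c) (t c (t a b)) rfl rfl
    clear hclosed hvalue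
    grind
  have h₅ : t (t c (t a b)) (t c a) = b := by
    have := hvalue 5 6 (t c (t a b)) (t c a) rfl rfl
    clear hclosed hvalue
    grind
  fin_cases d
  exacts [rfl, rfl, rfl, h₃, h₄, h₅, (comm _ _).trans ((congrArg _ (comm c a)).trans (cancel a c))]

theorem exists_fano (ht : IsSteinerQuasigroup t) {F : Finset P} (hF : #F = 7)
    (hclosed : ∀ a ∈ F, ∀ b ∈ F, t a b ∈ F) (ha : a ∈ F) :
    ∃ q : Fin 7 → P, Function.Injective q ∧ (∀ f, q f ∈ F) ∧ q 0 = a ∧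
      ∀ d, t (q d) (q (d + 1)) = q (d + 3) := by
  classical
  obtain ⟨b, hb, hba⟩ : ∃ b ∈ F, b ∉ ({a} : Finset P) :=
    exists_mem_notMem_of_card_lt_card (by simp [hF])
  obtain ⟨c, hc, hcL⟩ : ∃ c ∈ F, c ∉ ({a, b, t a b} : Finset P) :=
    exists_mem_notMem_of_card_lt_card (card_le_three.trans_lt (by simp [hF]))
  simp only [mem_insert, mem_singleton, not_or] at hba hcL
  obtain ⟨hca, hcb, hcab⟩ := hcL
  have hinj := ht.injective_fanoPoints hba hca hcb hcab
  have hmem : ∀ f, fanoPoints t a b c f ∈ F := by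
    intro f
    fin_cases f <;> simp [fanoPoints, ha, hb, hc, hclosed]
  have himage : univ.image (fanoPoints t a b c) = F :=
    eq_of_subset_of_card_le (image_subset_iff.2 fun f _ => hmem f)
      (by rw [card_image_of_injective _ hinj, hF, card_fin])
  refine ⟨fanoPoints t a b c, hinj, hmem, rfl, ht.fanoPoints_third hba hca hcb hcab fun f g => ?_⟩
  simpa [← himage] using hclosed _ (hmem f) _ (hmem g)

end IsSteinerQuasigroup

namespace IsKirkman

variable {P : Type*} [Fintype P] {x : P → Fin 7 → Fin 5}

theorem eq_third (hx : IsKirkman x) {a b c p : P} (hab : a ≠ b) (hac : a ≠ c) (hbc : b ≠ c)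
    {d : Fin 7} (hb : x b d = x a d) (hc : x c d = x a d) (hp : x p d = x a d) :
    p = a ∨ p = b ∨ p = c := by
  classical
  have hblock : ({a, b, c} : Finset P) = ({p | x p d = x a d} : Finset P) := by
    refine eq_of_subset_of_card_le ?_ ?_
    · simp [insert_subset_iff, hb, hc]
    · rw [hx.card_block, card_eq_three.2 ⟨a, b, c, hab, hac, hbc, rfl⟩]
  have := (Finset.ext_iff.1 hblock p).2 (by simpa using hp)
  simpa using this

theorem exists_third (hx : IsKirkman x) :
    ∃ t, IsSteinerQuasigroup t ∧ ∀ a b, ∃ d, x b d = x a d ∧ x (t a b) d = x a d := by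
  classical
  have hthird (a b : P) : ∃ c, (a = b → c = a) ∧ (a ≠ b → c ≠ a ∧ c ≠ b) ∧
      ∃ d, x b d = x a d ∧ x c d = x a d := by
    by_cases hab : a = b
    · exact ⟨a, by simp [hab], by simp [hab], 0, by simp [hab]⟩
    · obtain ⟨d, hd⟩ := hx.exists_day hab
      obtain ⟨c, hc, hcab⟩ : ∃ c ∈ ({p | x p d = x a d} : Finset P), c ∉ ({a, b} : Finset P) :=
        exists_mem_notMem_of_card_lt_card (card_le_two.trans_lt (by simp [hx.card_block]))
      exact ⟨c, by simp [hab], fun _ => by simpa using hcab, d, hd.symm, by simpa using hc⟩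
  choose t ht_self ht_ne day hdb hdt using hthird
  have hunique {a b c : P} (hab : a ≠ b) (hca : c ≠ a) (hcb : c ≠ b) {d : Fin 7}
      (hb : x b d = x a d) (hc : x c d = x a d) : t a b = c := by
    obtain rfl : d = day a b := hx.day_unique hab hb.symm (hdb a b).symm
    obtain ⟨ha', hb'⟩ := ht_ne a b hab
    simpa [ha', hb'] using hx.eq_third hab hca.symm hcb.symm hb hc (hdt a b)
  refine ⟨t, ⟨fun a => ht_self a a rfl, fun a b => ?_, fun a b => ?_⟩,
    fun a b => ⟨day a b, hdb a b, hdt a b⟩⟩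
  · rcases eq_or_ne a b with rfl | hab
    · rfl
    · obtain ⟨ha, hb⟩ := ht_ne b a hab.symm
      exact hunique hab hb ha (hdb b a).symm ((hdt b a).trans (hdb b a).symm)
  · rcases eq_or_ne a b with rfl | hab
    · rw [ht_self a a rfl, ht_self a a rfl]
    · obtain ⟨ha, hb⟩ := ht_ne a b hab
      exact hunique ha.symm hab.symm hb.symm (hdt a b) (hdb a b)

theorem card_inter_block_of_even (hx : IsKirkman x) {A : Finset P} {d : Fin 7} {γ : Fin 5}
    (heven : Even #{a ∈ A | x a d = γ}) :
    #{a ∈ A | x a d = γ} = 0 ∨ #{a ∈ A | x a d = γ} = 2 := by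
  have hle : #{a ∈ A | x a d = γ} ≤ 3 :=
    (card_le_card (filter_subset_filter _ A.subset_univ)).trans_eq (hx.card_block d γ)
  generalize #{a ∈ A | x a d = γ} = n at heven hle
  obtain ⟨m, rfl⟩ := heven
  omega

theorem card_even_set (hx : IsKirkman x) {A : Finset P} (hA : A.Nonempty)
    (heven : ∀ d γ, Even #{a ∈ A | x a d = γ}) : #A = 8 := by
  have hfiber (d : Fin 7) : ∑ γ, #{a ∈ A | x a d = γ} ^ 2 = 2 * #A := by
    rw [card_eq_sum_card_fiberwise (f := fun a => x a d) (t := univ) (by simp), mul_sum]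
    refine sum_congr rfl fun γ _ => ?_
    rcases hx.card_inter_block_of_even (heven d γ) with h | h <;> simp [h]
  have hsq := hx.sum_sq_card_fiber A
  simp only [hfiber, sum_const, card_univ, Fintype.card_fin, smul_eq_mul] at hsq
  have hpos := card_pos.2 hA
  nlinarith

theorem notMem_even_set (hx : IsKirkman x) {A : Finset P} (heven : ∀ d γ, Even #{a ∈ A | x a d = γ})
    {a b c : P} (ha : a ∉ A) (hb : b ∉ A) (hab : a ≠ b) {d : Fin 7} (hbd : x b d = x a d)
    (hcd : x c d = x a d) : c ∉ A := by
  classical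
  intro hc
  have htwo : #{p ∈ A | x p d = x a d} = 2 :=
    (hx.card_inter_block_of_even (heven d (x a d))).resolve_left
      (card_ne_zero_of_mem (mem_filter.2 ⟨hc, hcd⟩))
  have hsub : ({p ∈ A | x p d = x a d} : Finset P) ∪ {a, b} ⊆ ({p | x p d = x a d} : Finset P) :=
    union_subset (filter_subset_filter _ A.subset_univ) (by simp [insert_subset_iff, hbd])
  have hdisj : Disjoint ({p ∈ A | x p d = x a d} : Finset P) {a, b} := by simp [ha, hb]
  have := card_le_card hsub
  rw [card_union_of_disjoint hdisj, htwo, card_pair hab, hx.card_block] at this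
  omega

end IsKirkman

theorem IsKirkman.relabel {P Q : Type*} [Fintype P] [Fintype Q] {x : P → Fin 7 → Fin 5}
    (hx : IsKirkman x) (σ : Q ≃ P) (δ : Equiv.Perm (Fin 7)) :
    IsKirkman fun q d => x (σ q) (δ d) where
  card_block d γ := by
    rw [← hx.card_block (δ d) γ]
    exact card_equiv σ (by simp)
  agree_eq_one p q hpq := by
    rw [← hx.agree_eq_one _ _ (σ.injective.ne hpq)]
    exact card_equiv δ (by simp)

section Subplane

variable {P : Type*} [Fintype P] {x : P → Fin 7 → Fin 5}

theorem IsKirkman.exists_line_days (hx : IsKirkman x) {t : P → P → P}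
    (hday : ∀ a b, ∃ d, x b d = x a d ∧ x (t a b) d = x a d) {q : Fin 7 → P}
    (hq : Function.Injective q) (hline : ∀ d, t (q d) (q (d + 1)) = q (d + 3)) :
    ∃ δ : Equiv.Perm (Fin 7), ∀ d, ∀ f ∈ fanoLine d, x (q f) (δ d) = x (q d) (δ d) := by
  choose δ hδ₁ hδ₃ using fun d => hday (q d) (q (d + 1))
  have hδ (d f : Fin 7) (hf : f ∈ fanoLine d) : x (q f) (δ d) = x (q d) (δ d) := by
    simp only [fanoLine, mem_insert, mem_singleton] at hf
    rcases hf with rfl | rfl | rfl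
    · rfl
    · exact hδ₁ d
    · rw [← hline, hδ₃]
  have hinj : Function.Injective δ := by
    intro d d' h
    by_contra hne
    have hmeet : ∀ d d', d ≠ d' → (∃ f ∈ fanoLine d, f ∈ fanoLine d') ∧
        3 < #(fanoLine d ∪ fanoLine d') := by decide
    obtain ⟨⟨f, hf, hf'⟩, hcard⟩ := hmeet d d' hne
    have hsub : (fanoLine d ∪ fanoLine d').map ⟨q, hq⟩ ⊆
        ({p | x p (δ d) = x (q d) (δ d)} : Finset P) := by
      intro p hp
      obtain ⟨g, hg, rfl⟩ := mem_map.1 hp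
      rw [mem_filter]
      refine ⟨mem_univ _, (mem_union.1 hg).elim (hδ d g) fun hg => ?_⟩
      rw [← hδ d f hf, h]
      exact (hδ d' g hg).trans (hδ d' f hf').symm
    have := card_le_card hsub
    rw [card_map, hx.card_block] at this
    omega
  exact ⟨Equiv.ofBijective δ (Finite.injective_iff_bijective.1 hinj), hδ⟩

theorem IsKirkman.exists_hasSubplane (hx : IsKirkman x) {A : Finset P} (hA : A.Nonempty)
    (heven : ∀ d γ, Even #{a ∈ A | x a d = γ}) {p : P} (hp : p ∉ A) :
    ∃ (σ : Fin 15 ≃ P) (δ : Equiv.Perm (Fin 7)),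
      σ (fano 0) = p ∧ HasSubplane fun a d => x (σ a) (δ d) := by
  classical
  obtain ⟨t, ht, hday⟩ := hx.exists_third
  have hclosed : ∀ a ∈ Aᶜ, ∀ b ∈ Aᶜ, t a b ∈ Aᶜ := by
    intro a ha b hb
    rw [mem_compl] at ha hb ⊢
    rcases eq_or_ne a b with rfl | hab
    · rwa [ht.idem]
    · obtain ⟨d, hbd, htd⟩ := hday a b
      exact hx.notMem_even_set heven ha hb hab hbd htd
  have hcard : #Aᶜ = 7 := by rw [card_compl, hx.card_points, hx.card_even_set hA heven]
  obtain ⟨q, hq, -, rfl, hline⟩ := ht.exists_fano hcard hclosed (mem_compl.2 hp)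
  obtain ⟨δ, hδ⟩ := hx.exists_line_days hday hq hline
  have hfano : Function.Injective fano := Fin.castAdd_injective 7 8
  obtain ⟨σ, hσ⟩ : ∃ σ : Fin 15 ≃ P, ∀ f, σ (fano f) = q f := by
    obtain ⟨σ, hσ⟩ := Set.MapsTo.exists_equiv_extend_of_card_eq (t := (univ : Finset P))
      (s := Set.range fano) (f := Function.extend fano q fun _ => q 0)
      (by rw [Fintype.card_fin, card_univ, hx.card_points]) (fun _ _ => by simp) (by
        rintro _ ⟨f, rfl⟩ _ ⟨g, rfl⟩ hfg
        rw [hfano.extend_apply, hfano.extend_apply] at hfg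
        rw [hq hfg])
    refine ⟨σ.trans (Equiv.subtypeUnivEquiv mem_univ), fun f => ?_⟩
    rw [Equiv.trans_apply, Equiv.subtypeUnivEquiv_apply, hσ _ ⟨f, rfl⟩, hfano.extend_apply]
  refine ⟨σ, δ, hσ 0, hx.relabel σ δ, fun d f hf => ?_⟩
  simp only [hσ, hδ d f hf]

end Subplane

section Normal

/-- The points of the subplane off line 0. -/
def offLine : Fin 4 → Fin 7 := ![2, 4, 5, 6]

/-- The days other than day 0 on which `fano 2` is in a block with two outer points. -/
def hexagonDays : Fin 3 → Fin 7 := ![3, 4, 5]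

/-- The numbering of the outer points in the normal form, where `(f, i)` stands for one of the two
outer points in the block of `fano (offLine f)` on day 0. -/
def seat (i j k : Fin 2) : Fin 8 → Fin 4 × Fin 2 :=
  ![(0, 0), (0, 1), (1, i + 1), (1, i), (2, j), (2, j + 1), (3, k), (3, k + 1)]

theorem injective_seat : ∀ i j k, Function.Injective (seat i j k) := by decide

/-- The six places `(f, i)` form a 2-regular graph without digons, the edges joining the two places
of each `f` and any two places with the same value; so they form a hexagon. -/
theorem exists_hexagon : ∀ m : Fin 3 → Fin 2 → Fin 3, (∀ f, m f 0 ≠ m f 1) →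
    (∀ v, #{c : Fin 3 × Fin 2 | m c.1 c.2 = v} ≤ 2) →
    ∃ i j k, m 0 i = m 1 j ∧ m 1 (j + 1) = m 2 k ∧ m 2 (k + 1) = m 0 (i + 1) := by
  decide +kernel

variable {x : Fin 15 → Fin 7 → Fin 5}

theorem HasSubplane.exists_pairs (hx : HasSubplane x) :
    ∃ p : Fin 4 × Fin 2 → Fin 8, Function.Injective p ∧
      ∀ c, x (outer (p c)) 0 = x (fano (offLine c.1)) 0 := by
  have hoff : ∀ f, offLine f ∉ fanoLine 0 := by decide
  have hpair (f : Fin 4) : ∃ p : Fin 2 → Fin 8, p 0 ≠ p 1 ∧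
      ∀ i, x (outer (p i)) 0 = x (fano (offLine f)) 0 := by
    obtain ⟨z, z', hne, hzz'⟩ := card_eq_two.1 (hx.card_outer (hoff f))
    have hmem (w : Fin 8) := Finset.ext_iff.1 hzz' w
    simp only [mem_filter, mem_univ, true_and, mem_insert, mem_singleton] at hmem
    exact ⟨![z, z'], hne, Fin.forall_fin_two.2 ⟨(hmem z).2 (.inl rfl), (hmem z').2 (.inr rfl)⟩⟩
  choose p hne hp using hpair
  refine ⟨fun c => p c.1 c.2, ?_, fun c => hp c.1 c.2⟩
  rintro ⟨f, i⟩ ⟨g, j⟩ (h : p f i = p g j)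
  have hfg : x (fano (offLine f)) 0 = x (fano (offLine g)) 0 := by rw [← hp f i, h, hp g j]
  have hinj : Function.Injective offLine := by decide
  obtain rfl : f = g := (hx.fano_eq_iff.1 hfg).elim (fun h => hinj h) fun h => (hoff f h.1).elim
  have hij : ∀ i j : Fin 2, i ≠ j → i = 0 ∧ j = 1 ∨ i = 1 ∧ j = 0 := by decide
  by_contra hc
  rcases hij i j (by simpa using hc) with ⟨rfl, rfl⟩ | ⟨rfl, rfl⟩
  exacts [hne f h, hne f h.symm]

theorem HasSubplane.exists_day (hx : HasSubplane x) {z : Fin 8}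
    (hz : x (outer z) 0 ≠ x (fano 2) 0) :
    ∃ m : Fin 3, x (outer z) (hexagonDays m) = x (fano 2) (hexagonDays m) := by
  obtain ⟨d, hd⟩ := hx.toIsKirkman.exists_day (outer_ne_fano z 2)
  have hline : 2 ∉ fanoLine d := fun h => hx.outer_ne_line d z (hd.trans (hx.line d 2 h))
  have hdays : ∀ d, 2 ∉ fanoLine d → d = 0 ∨ ∃ m : Fin 3, hexagonDays m = d := by decide
  rcases hdays d hline with rfl | ⟨m, rfl⟩
  exacts [(hz hd).elim, ⟨m, hd⟩]

theorem HasSubplane.exists_seating (hx : HasSubplane x) {p : Fin 4 × Fin 2 → Fin 8}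
    (hinj : Function.Injective p) (hp : ∀ c, x (outer (p c)) 0 = x (fano (offLine c.1)) 0) :
    ∃ i j k, ∀ c ∈ matchingPairs, ∃ d, x (outer (p (seat i j k c.1))) d = x (fano 2) d ∧
      x (outer (p (seat i j k c.2))) d = x (fano 2) d := by
  have hday (c : Fin 3 × Fin 2) : ∃ m : Fin 3, x (outer (p (c.1.succ, c.2))) (hexagonDays m) =
      x (fano 2) (hexagonDays m) := by
    refine hx.exists_day ?_
    have hoff : ∀ f : Fin 3, offLine f.succ ≠ 2 ∧ offLine f.succ ∉ fanoLine 0 := by decide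
    rw [hp, Ne, hx.fano_eq_iff]
    exact not_or.2 ⟨(hoff c.1).1, fun h => (hoff c.1).2 h.1⟩
  choose m hm using hday
  have hdays : ∀ v : Fin 3, hexagonDays v ≠ 0 ∧ 2 ∉ fanoLine (hexagonDays v) := by decide
  have hne (f : Fin 3) : m (f, 0) ≠ m (f, 1) := fun h => by
    have hne : outer (p (f.succ, 0)) ≠ outer (p (f.succ, 1)) := fun he => by
      simpa using hinj (Fin.natAdd_injective 8 7 he)
    exact (hdays _).1 (hx.day_unique hne ((hm (f, 0)).trans (h ▸ (hm (f, 1)).symm))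
      ((hp _).trans (hp (f.succ, 1)).symm))
  have htwo (v : Fin 3) : #{c : Fin 3 × Fin 2 | m c = v} ≤ 2 := by
    refine le_of_le_of_eq ?_ (hx.card_outer (hdays v).2)
    refine card_le_card_of_injOn (fun c => p (c.1.succ, c.2)) (fun c hc => ?_) fun c _ c' _ h => ?_
    · obtain rfl : m c = v := by simpa using hc
      simpa using hm c
    · simpa [Prod.ext_iff] using hinj h
  obtain ⟨i, j, k, h₁, h₂, h₃⟩ := exists_hexagon (fun f i => m (f, i)) hne htwo
  refine ⟨i, j, k, ?_⟩
  simp only [matchingPairs, List.forall_mem_cons, List.not_mem_nil]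
  exact ⟨⟨_, hm (0, i), h₁ ▸ hm (1, j)⟩, ⟨_, hm (1, j + 1), h₂ ▸ hm (2, k)⟩,
    ⟨_, hm (2, k + 1), h₃ ▸ hm (0, i + 1)⟩, by simp⟩

theorem HasSubplane.exists_isNormal (hx : HasSubplane x) :
    ∃ σ : Equiv.Perm (Fin 15), σ (fano 0) = fano 0 ∧ IsNormal fun a => x (σ a) := by
  obtain ⟨p, hinj, hp⟩ := hx.exists_pairs
  obtain ⟨i, j, k, hseat⟩ := hx.exists_seating hinj hp
  let τ : Equiv.Perm (Fin 8) := Equiv.ofBijective (p ∘ seat i j k)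
    (Finite.injective_iff_bijective.1 (hinj.comp (injective_seat i j k)))
  let σ : Equiv.Perm (Fin 15) := finSumFinEquiv.permCongr (Equiv.sumCongr (Equiv.refl (Fin 7)) τ)
  have hfano (f : Fin 7) : σ (fano f) = fano f :=
    congrArg (finSumFinEquiv ∘ Sum.map id τ) (finSumFinEquiv_symm_apply_castAdd f)
  have houter (z : Fin 8) : σ (outer z) = outer (p (seat i j k z)) :=
    congrArg (finSumFinEquiv ∘ Sum.map id τ) (finSumFinEquiv_symm_apply_natAdd z)
  have hzero : ∀ c ∈ dayZeroPairs, offLine (seat i j k c.2.1).1 = c.1 ∧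
      offLine (seat i j k c.2.2).1 = c.1 := by
    simp [dayZeroPairs, seat, offLine]
  refine ⟨σ, hfano 0, ⟨hx.relabel σ 1, fun d f hf => ?_⟩, fun c hc => ?_, fun c hc => ?_⟩
  · simpa only [hfano] using hx.line d f hf
  · simp only [hfano, houter, hp, hzero c hc, and_self]
  · simpa only [hfano, houter] using hseat c hc

end Normal

theorem IsKirkman.exists_isNormal {P : Type*} [Fintype P] {x : P → Fin 7 → Fin 5}
    (hx : IsKirkman x) {A : Finset P} (hA : A.Nonempty)
    (heven : ∀ d γ, Even #{a ∈ A | x a d = γ}) {p : P} (hp : p ∉ A) :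
    ∃ (σ : Fin 15 ≃ P) (δ : Equiv.Perm (Fin 7)), σ 0 = p ∧ IsNormal fun a d => x (σ a) (δ d) := by
  obtain ⟨σ, δ, hσ, hsub⟩ := hx.exists_hasSubplane hA heven hp
  obtain ⟨τ, hτ, hnormal⟩ := hsub.exists_isNormal
  exact ⟨τ.trans σ, δ, (congrArg σ hτ).trans hσ, hnormal⟩

/-! ### Exhaustive search with bit masks -/

section Search

variable {α : Type*}

/-- Backtracking search: choose one candidate from each slot so that the masks of the chosen
candidates are pairwise disjoint, and test `leaf` on every complete choice (last slot first);
`used` is the union of the masks chosen so far. -/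
def search (mask : α → ℕ) (leaf : List α → Bool) : List (List α) → ℕ → List α → Bool
  | [], _, acc => leaf acc
  | cs :: slots, used, acc => cs.all fun c =>
      bif (Nat.land used (mask c)).beq 0 then
        search mask leaf slots (Nat.lor used (mask c)) (c :: acc)
      else true

theorem leaf_of_search {mask : α → ℕ} {leaf : List α → Bool} {choice : List α}
    {slots : List (List α)} (hmem : List.Forall₂ (· ∈ ·) choice slots) {used : ℕ} {acc : List α}
    (hsearch : search mask leaf slots used acc = true)
    (hused : ∀ c ∈ choice, used &&& mask c = 0)
    (hdisj : choice.Pairwise fun c c' => mask c &&& mask c' = 0) :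
    leaf (choice.reverse ++ acc) = true := by
  induction hmem generalizing used acc with
  | nil => simpa [search] using hsearch
  | @cons c cs choice slots hc _ ih =>
    rw [List.forall_mem_cons] at hused
    rw [List.pairwise_cons] at hdisj
    have hstep := List.all_eq_true.1 hsearch c hc
    rw [show (Nat.land used (mask c)).beq 0 = true from Nat.beq_eq.mpr hused.1, cond_true] at hstep
    have hused' : ∀ c' ∈ choice, (used ||| mask c) &&& mask c' = 0 := fun c' hc' => by
      rw [Nat.and_or_distrib_right, hused.2 c' hc', hdisj.1 c' hc', Nat.or_self]
    simpa using ih hstep hused' hdisj.2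

end Search

section Words

/-- The number of members of `w`, read as bit sets, that contain `p`. -/
def deg (w : List ℕ) (p : ℕ) : ℕ := w.countP fun b => b.testBit p

/-- Fold over all words with one letter from each list of `letters`. A word is passed, letters
reversed, along with the sum modulo 2 of its letters, both starting from the given values. -/
def foldWords {β : Type*} (f : ℕ × List ℕ → β → β) : List (List ℕ) → ℕ × List ℕ → β → β
  | [], s, z => f s z
  | bs :: letters, s, z => bs.foldr (fun b => foldWords f letters (Nat.xor b s.1, b :: s.2)) z

/-- The words visited by `foldWords`. -/
def extensions : List (List ℕ) → ℕ × List ℕ → List (ℕ × List ℕ)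
  | [], s => [s]
  | bs :: letters, s => bs.flatMap fun b => extensions letters (Nat.xor b s.1, b :: s.2)

theorem foldWords_eq_foldr {β : Type*} (f : ℕ × List ℕ → β → β) (letters : List (List ℕ))
    (s : ℕ × List ℕ) (z : β) : foldWords f letters s z = (extensions letters s).foldr f z := by
  induction letters generalizing s z with
  | nil => rfl
  | cons bs letters ih =>
    rw [extensions, List.foldr_flatMap]
    exact congrArg (List.foldr · z bs) (funext₂ fun b z => ih (Nat.xor b s.1, b :: s.2) z)

theorem exists_mem_extensions {w : List ℕ} {letters : List (List ℕ)}
    (h : List.Forall₂ (· ∈ ·) w letters) (s : ℕ × List ℕ) :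
    ∃ t, (t, w.reverse ++ s.2) ∈ extensions letters s ∧
      ∀ p, t.testBit p = (s.1.testBit p ^^ decide (Odd (deg w p))) := by
  induction h generalizing s with
  | nil => exact ⟨s.1, by simp [extensions], by simp [deg]⟩
  | @cons b bs w letters hb _ ih =>
    obtain ⟨t, ht, hbit⟩ := ih (Nat.xor b s.1, b :: s.2)
    refine ⟨t, List.mem_flatMap.2 ⟨b, hb, by simpa using ht⟩, fun p => ?_⟩
    have hxor : (Nat.xor b s.1).testBit p = (b.testBit p ^^ s.1.testBit p) := Nat.testBit_xor ..
    have hcons : deg (b :: w) p = deg w p + if b.testBit p then 1 else 0 := List.countP_cons ..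
    rw [hbit, hxor, hcons]
    cases b.testBit p <;> cases s.1.testBit p <;>
      simp [Nat.odd_add_one, -Nat.not_odd_iff_even]

/-- Adds the sum of the word `s` to the bit set `R`. -/
def mark (s : ℕ × List ℕ) (R : ℕ) : ℕ := Nat.lor R (Nat.shiftLeft 1 s.1)

theorem testBit_foldr_mark {l : List (ℕ × List ℕ)} {s : ℕ × List ℕ} (h : s ∈ l) :
    (l.foldr mark 0).testBit s.1 = true := by
  induction l with
  | nil => simp at h
  | cons t l ih =>
    have hor : ((t :: l).foldr mark 0).testBit s.1 =
        ((l.foldr mark 0).testBit s.1 || (1 <<< t.1).testBit s.1) := Nat.testBit_or ..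
    rw [hor]
    rcases List.mem_cons.1 h with rfl | h
    · simp
    · simp [ih h]

/-- The words whose sum modulo 2 differs from a member of the bit set `R` exactly in bit 0. -/
def hits (letters : List (List ℕ)) (R : ℕ) : List (ℕ × List ℕ) :=
  foldWords (fun s out =>
    bif (Nat.land (Nat.shiftRight R (Nat.xor 1 s.1)) 1).beq 1 then s :: out else out)
    letters (0, []) []

theorem mem_hits {letters : List (List ℕ)} {R : ℕ} {s : ℕ × List ℕ}
    (hs : s ∈ extensions letters (0, [])) (hR : R.testBit (1 ^^^ s.1) = true) :
    s ∈ hits letters R := by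
  rw [hits, foldWords_eq_foldr]
  have hkeep : (Nat.land (Nat.shiftRight R (Nat.xor 1 s.1)) 1).beq 1 = true := by
    rw [Nat.testBit_eq_decide_div_mod_eq, ← Nat.shiftRight_eq_div_pow, ← Nat.and_one_is_mod,
      decide_eq_true_eq] at hR
    exact Nat.beq_eq.mpr hR
  generalize extensions letters (0, []) = l at hs
  induction l with
  | nil => simp at hs
  | cons t l ih =>
    rw [List.foldr_cons]
    rcases List.mem_cons.1 hs with rfl | hs
    · rw [hkeep]; exact List.mem_cons_self
    · generalize (Nat.land (Nat.shiftRight R (Nat.xor 1 t.1)) 1).beq 1 = b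
      cases b with
      | false => exact ih hs
      | true => exact List.mem_cons_of_mem _ (ih hs)

/-- Every point `1, …, 14` has degree 0 or 2. -/
def isBalanced (w : List ℕ) : Bool :=
  (List.range 14).all fun q => (deg w (q + 1)).beq 0 || (deg w (q + 1)).beq 2

/-- The balanced words with letters from `front` and `back` whose sum modulo 2 is the point 0,
by meeting in the middle. -/
def balancedWords (front back : List (List ℕ)) : List (List ℕ) :=
  let F := hits front (foldWords mark back (0, []) 0)
  let B := hits back (F.foldr mark 0)
  F.flatMap fun s =>
    ((B.filter fun t => (Nat.xor s.1 t.1).beq 1).map fun t => s.2 ++ t.2).filter isBalanced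

theorem mem_balancedWords {front back : List (List ℕ)} {v w : List ℕ}
    (hv : List.Forall₂ (· ∈ ·) v front) (hw : List.Forall₂ (· ∈ ·) w back)
    (hodd : ∀ p, Odd (deg (v ++ w) p) ↔ p = 0)
    (hdeg : ∀ p ∈ Set.Icc 1 14, deg (v ++ w) p = 0 ∨ deg (v ++ w) p = 2) :
    v.reverse ++ w.reverse ∈ balancedWords front back := by
  obtain ⟨s, hs, hsbit⟩ := exists_mem_extensions hv (0, [])
  obtain ⟨t, ht, htbit⟩ := exists_mem_extensions hw (0, [])
  have hdeg_append (p : ℕ) : deg (v ++ w) p = deg v p + deg w p := List.countP_append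
  have hst : s ^^^ t = 1 := Nat.eq_of_testBit_eq fun p => by
    have := hodd p
    rw [hdeg_append, Nat.odd_add'] at this
    rw [Nat.testBit_xor, hsbit, htbit, Bool.eq_iff_iff, Nat.testBit_one_eq_true_iff_self_eq_zero,
      ← this, ← Nat.not_odd_iff_even]
    simp only [Nat.zero_testBit, Bool.false_xor, bne_iff_ne, ne_eq, decide_eq_decide]
    tauto
  have hs' : 1 ^^^ s = t := by rw [← hst, Nat.xor_comm s, Nat.xor_assoc, Nat.xor_self, Nat.xor_zero]
  have ht' : 1 ^^^ t = s := by rw [← hst, Nat.xor_assoc, Nat.xor_self, Nat.xor_zero]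
  simp only [List.append_nil] at hs ht
  have hF := mem_hits (R := foldWords mark back (0, []) 0) hs (by
    rw [hs', foldWords_eq_foldr]
    exact testBit_foldr_mark ht)
  have hB := mem_hits (R := (hits front _).foldr mark 0) ht (by
    rw [ht']
    exact testBit_foldr_mark hF)
  have hbal : isBalanced (v.reverse ++ w.reverse) = true := by
    have hrev (p : ℕ) : deg (v.reverse ++ w.reverse) p = deg (v ++ w) p := by
      simp [deg, List.countP_append]
    simp only [isBalanced, List.all_eq_true, List.mem_range, Bool.or_eq_true, Nat.beq_eq, hrev]
    exact fun q hq => hdeg _ ⟨by omega, by omega⟩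
  exact List.mem_flatMap.2 ⟨_, hF, List.mem_filter.2 ⟨List.mem_map_of_mem
    (List.mem_filter.2 ⟨hB, Nat.beq_eq.mpr hst⟩), hbal⟩⟩

end Words

/-! ### The normal form admits few words -/

section Tables

/-- A candidate for the block of `fano f` on day `d`, as `(d, f, e)` where bit `z` of `e` says
whether `outer z` belongs to the block. -/
abbrev Placement := ℕ × ℕ × ℕ

-- The functions `Nat.land`, `Nat.beq` etc. instead of their notations, and `bif` instead of `if`,
-- spare the kernel the unfolding of instances.

/-- Two placements of distinct blocks have disjoint masks: the parts of the mask are `e` indexed by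
`f`, `e` indexed by `d`, and the singleton `{e}`. -/
def Placement.mask (c : Placement) : ℕ :=
  Nat.lor (Nat.shiftLeft c.2.2 (Nat.mul 8 c.2.1))
    (Nat.lor (Nat.shiftLeft c.2.2 (Nat.mul 8 (Nat.add 7 c.1)))
      (Nat.shiftLeft 1 (Nat.add 112 c.2.2)))

/-- The two-element subsets of `Fin 8` as bit sets. -/
def pairMasks : List ℕ :=
  (List.range 8).flatMap fun z => (List.range z).map fun z' =>
    Nat.lor (Nat.shiftLeft 1 z) (Nat.shiftLeft 1 z')

/-- The placements prescribed by `dayZeroPairs`. -/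
def dayZeroPlacements : List Placement := [(0, 2, 3), (0, 4, 12), (0, 5, 48), (0, 6, 192)]

/-- The blocks off their Fano lines that the normal form does not restrict, in the order in which
the search places them. -/
def freeCells : List (Fin 7 × Fin 7) :=
  [(3, 5), (3, 1), (3, 0), (6, 5), (1, 5), (4, 6), (1, 6), (2, 6), (4, 1), (4, 3), (2, 1),
   (6, 1), (2, 4), (2, 0), (6, 4), (5, 4), (6, 3), (1, 0), (5, 3), (1, 3), (5, 0)]

/-- The candidates for the blocks off the Fano lines, in the order of `cells`. The bit sets 24,
96 and 132 are the three pairs of `matchingPairs`. -/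
def slots : List (List Placement) :=
  dayZeroPlacements.map (fun c => [c]) ++
    ([3, 4, 5].map fun d => [24, 96, 132].map fun e => (d, 2, e)) ++
    freeCells.map fun s => (pairMasks.map fun e => (s.1.val, s.2.val, e)).filter
      fun c : Placement => dayZeroPlacements.all fun c' => (Nat.land c'.mask c.mask).beq 0

/-- The blocks of day `d`, the Fano line first, as bit sets with `fano f` at `f` and `outer z` at
`7 + z`. -/
def dayBlocks (acc : List Placement) (d : ℕ) : List ℕ :=
  (1 <<< d ||| 1 <<< ((d + 1) % 7) ||| 1 <<< ((d + 3) % 7)) ::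
    (acc.filter fun c => c.1.beq d).map fun c => 1 <<< c.2.1 ||| c.2.2 <<< 7

/-- All words that agree an odd number of times with the point 0 and zero or two times with every
other point of the system given by the placements `acc`, each as a list of blocks. -/
def wordsOf (acc : List Placement) : List (List ℕ) :=
  balancedWords ([0, 1, 2, 3].map (dayBlocks acc)) ([4, 5, 6].map (dayBlocks acc))

/-- The test at the leaves of the search: at most 8 words, of which at most 3 agree exactly once
with the point 0. -/
def hasFewWords (acc : List Placement) : Bool :=
  (wordsOf acc).length.ble 8 && ((wordsOf acc).filter fun w => (deg w 0).beq 1).length.ble 3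

set_option maxRecDepth 100000 in
theorem search_hasFewWords : search Placement.mask hasFewWords slots 0 [] = true := by
  decide +kernel

end Tables

section Normal

variable {x : Fin 15 → Fin 7 → Fin 5}

/-- The outer points in the block of `fano f` on day `d`, as a bit set. -/
def outerMask (x : Fin 15 → Fin 7 → Fin 5) (d f : Fin 7) : ℕ :=
  Nat.ofBits fun z : Fin 8 => decide (x (outer z) d = x (fano f) d)

/-- The placement of the block of `fano s.2` on day `s.1` in the system `x`. -/
def placement (x : Fin 15 → Fin 7 → Fin 5) (s : Fin 7 × Fin 7) : Placement :=
  (s.1, s.2, outerMask x s.1 s.2)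

/-- The block `γ` of day `d` as a bit set. -/
def blockMask (x : Fin 15 → Fin 7 → Fin 5) (d : Fin 7) (γ : Fin 5) : ℕ :=
  Nat.ofBits fun p : Fin 15 => decide (x p d = γ)

theorem testBit_outerMask {d f : Fin 7} {i : ℕ} :
    (outerMask x d f).testBit i = true ↔
      ∃ z : Fin 8, (z : ℕ) = i ∧ x (outer z) d = x (fano f) d := by
  by_cases hi : i < 8
  · simp only [outerMask, Nat.testBit_ofBits_lt _ _ hi, decide_eq_true_eq]
    exact ⟨fun h => ⟨⟨i, hi⟩, rfl, h⟩, by rintro ⟨z, rfl, h⟩; exact h⟩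
  · simp only [outerMask, Nat.testBit_ofBits_ge _ _ (not_lt.1 hi), Bool.false_eq_true, false_iff]
    rintro ⟨z, rfl, -⟩
    exact hi z.isLt

theorem outerMask_eq_ofBits_pair {d f : Fin 7} (hx : IsNormal x) (hf : f ∉ fanoLine d)
    {z z' : Fin 8} (hne : z ≠ z') (hz : x (outer z) d = x (fano f) d)
    (hz' : x (outer z') d = x (fano f) d) :
    outerMask x d f = Nat.ofBits fun y => decide (y = z ∨ y = z') := by
  have hpair : {z, z'} = ({y | x (outer y) d = x (fano f) d} : Finset (Fin 8)) :=
    eq_of_subset_of_card_le (insert_subset (mem_filter.2 ⟨mem_univ z, hz⟩)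
      (singleton_subset_iff.2 (mem_filter.2 ⟨mem_univ z', hz'⟩)))
      (by rw [card_pair hne]; exact (hx.card_outer hf).le)
  refine congrArg Nat.ofBits (funext fun y => decide_eq_decide.2 ?_)
  simpa using (Finset.ext_iff.1 hpair y).symm

theorem exists_outer_pair {d f : Fin 7} (hx : IsNormal x) (hf : f ∉ fanoLine d) :
    ∃ z z', z ≠ z' ∧ x (outer z) d = x (fano f) d ∧ x (outer z') d = x (fano f) d := by
  obtain ⟨z, z', hne, h⟩ := card_eq_two.1 (hx.card_outer hf)
  simp only [Finset.ext_iff, mem_filter, mem_univ, true_and, mem_insert, mem_singleton] at h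
  exact ⟨z, z', hne, (h z).2 (Or.inl rfl), (h z').2 (Or.inr rfl)⟩

theorem outerMask_mem_pairMasks {d f : Fin 7} (hx : IsNormal x) (hf : f ∉ fanoLine d) :
    outerMask x d f ∈ pairMasks := by
  have hmem : ∀ z z' : Fin 8, z ≠ z' →
      (Nat.ofBits fun y : Fin 8 => decide (y = z ∨ y = z')) ∈ pairMasks := by decide +kernel
  obtain ⟨z, z', hne, hz, hz'⟩ := exists_outer_pair hx hf
  rw [outerMask_eq_ofBits_pair hx hf hne hz hz']
  exact hmem z z' hne

theorem testBit_mask {d f : Fin 7} {i : ℕ}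
    (h : (placement x (d, f)).mask.testBit i = true) :
    (∃ z : Fin 8, i = 8 * f + z ∧ x (outer z) d = x (fano f) d) ∨
      (∃ z : Fin 8, i = 8 * (7 + d) + z ∧ x (outer z) d = x (fano f) d) ∨
      i = 112 + outerMask x d f := by
  have hmask : (placement x (d, f)).mask = outerMask x d f <<< (8 * (f : ℕ)) |||
      (outerMask x d f <<< (8 * (7 + (d : ℕ))) ||| 1 <<< (112 + outerMask x d f)) := rfl
  simp only [hmask, Nat.testBit_or, Nat.testBit_shiftLeft, Bool.or_eq_true, Bool.and_eq_true,
    decide_eq_true_eq, testBit_outerMask, Nat.testBit_one_eq_true_iff_self_eq_zero] at h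
  rcases h with ⟨hi, z, hz, h⟩ | ⟨hi, z, hz, h⟩ | h
  · exact Or.inl ⟨z, by omega, h⟩
  · exact Or.inr (Or.inl ⟨z, by omega, h⟩)
  · exact Or.inr (Or.inr (by omega))

theorem mask_and_mask {d f d' f' : Fin 7} (hx : IsNormal x) (hf : f ∉ fanoLine d)
    (hf' : f' ∉ fanoLine d') (hne : (d, f) ≠ (d', f')) :
    (placement x (d, f)).mask &&& (placement x (d', f')).mask = 0 := by
  have hshared (z : Fin 8) (hz : x (outer z) d = x (fano f) d)
      (hz' : x (outer z) d' = x (fano f') d') (h : d = d' ∨ f = f') : False := by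
    rcases h with rfl | rfl
    · rcases hx.fano_eq_iff.1 (hz.symm.trans hz') with rfl | h
      · exact hne rfl
      · exact hf h.1
    · exact hne (by rw [hx.day_unique (outer_ne_fano z f) hz hz'])
  have hmask : outerMask x d f ≠ outerMask x d' f' := fun he => by
    obtain ⟨z, z', hzz', hz, hz'⟩ := exists_outer_pair hx hf
    have htransfer (z : Fin 8) (hz : x (outer z) d = x (fano f) d) :
        x (outer z) d' = x (fano f') d' := by
      obtain ⟨y, hy, h⟩ := testBit_outerMask.1 (he ▸ testBit_outerMask.2 ⟨z, rfl, hz⟩)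
      rwa [← Fin.ext hy]
    have hd := hx.day_unique (mt (Fin.natAdd_inj 7).1 hzz') (hz.trans hz'.symm)
      ((htransfer z hz).trans (htransfer z' hz').symm)
    exact hshared z hz (htransfer z hz) (Or.inl hd)
  refine Nat.eq_of_testBit_eq fun i => ?_
  rw [Nat.testBit_and, Nat.zero_testBit, Bool.and_eq_false_iff]
  by_contra! h
  simp only [ne_eq, Bool.not_eq_false] at h
  rcases testBit_mask h.1 with ⟨z, hi, hz⟩ | ⟨z, hi, hz⟩ | hi <;>
    rcases testBit_mask h.2 with ⟨z', hi', hz'⟩ | ⟨z', hi', hz'⟩ | hi' <;> try omega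
  · exact hshared z hz ((show z' = z by omega) ▸ hz') (Or.inr (by omega))
  · exact hshared z hz ((show z' = z by omega) ▸ hz') (Or.inl (by omega))

/-- The pairs `(d, f)` with `f` off line `d`, in the order of `slots`. -/
def cells : List (Fin 7 × Fin 7) :=
  [(0, 2), (0, 4), (0, 5), (0, 6), (3, 2), (4, 2), (5, 2)] ++ freeCells

theorem mem_cells : ∀ d f : Fin 7, (d, f) ∈ cells ↔ f ∉ fanoLine d := by decide

theorem placements_day_zero (hx : IsNormal x) :
    [(0, 2), (0, 4), (0, 5), (0, 6)].map (placement x) = dayZeroPlacements := by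
  have hedge : ∀ c ∈ dayZeroPairs,
      outerMask x 0 c.1 = Nat.ofBits fun y => decide (y = c.2.1 ∨ y = c.2.2) := fun c hc => by
    have hoff : ∀ c ∈ dayZeroPairs, c.1 ∉ fanoLine 0 ∧ c.2.1 ≠ c.2.2 := by decide +kernel
    exact outerMask_eq_ofBits_pair hx (hoff c hc).1 (hoff c hc).2 (hx.day_zero c hc).1
      (hx.day_zero c hc).2
  simp only [dayZeroPairs, List.forall_mem_cons] at hedge
  obtain ⟨h2, h4, h5, h6, -⟩ := hedge
  simp only [List.map_cons, List.map_nil, placement, h2, h4, h5, h6]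
  decide +kernel

theorem outerMask_two_mem (hx : IsNormal x) {d : Fin 7} (hd : d ≠ 0) (h2 : 2 ∉ fanoLine d) :
    outerMask x d 2 ∈ [24, 96, 132] := by
  have hnotzero (z : Fin 8) (hz : x (outer z) 0 = x (fano 2) 0) : x (outer z) d ≠ x (fano 2) d :=
    fun h => hd (hx.day_unique (outer_ne_fano z 2) h hz)
  have hzero := hx.day_zero (2, 0, 1) (by decide)
  obtain ⟨z, z', -, hz, -⟩ := exists_outer_pair hx h2
  have hz0 : z ≠ 0 := fun h => hnotzero 0 hzero.1 (h ▸ hz)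
  have hz1 : z ≠ 1 := fun h => hnotzero 1 hzero.2 (h ▸ hz)
  have hmask {a b : Fin 8} (hab : (a, b) ∈ matchingPairs) (h : z = a ∨ z = b) :
      outerMask x d 2 = Nat.ofBits fun y => decide (y = a ∨ y = b) := by
    have hpairs : ∀ c ∈ matchingPairs, c.1 ≠ c.2 := by decide
    have hiff := hx.outer_mem_iff_of_matching (hx.matching (a, b) hab) d
    rcases h with rfl | rfl
    · exact outerMask_eq_ofBits_pair hx h2 (hpairs _ hab) hz (hiff.1 hz)
    · exact outerMask_eq_ofBits_pair hx h2 (hpairs _ hab) (hiff.2 hz) hz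
  have hcases : ∀ z : Fin 8, z ≠ 0 → z ≠ 1 → (z = 3 ∨ z = 4) ∨ (z = 5 ∨ z = 6) ∨ z = 7 ∨ z = 2 := by
    decide
  rcases hcases z hz0 hz1 with h | h | h
  · rw [hmask (by decide) h]; decide
  · rw [hmask (by decide) h]; decide
  · rw [hmask (by decide) h]; decide

theorem placement_mem_slots (hx : IsNormal x) :
    List.Forall₂ (· ∈ ·) (cells.map (placement x)) slots := by
  have hzero := placements_day_zero hx
  have hoff2 : ∀ d ∈ [(3 : Fin 7), 4, 5], d ≠ 0 ∧ 2 ∉ fanoLine d := by decide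
  have hcells : cells = [(0, 2), (0, 4), (0, 5), (0, 6)] ++ [(3, 2), (4, 2), (5, 2)] ++ freeCells :=
    rfl
  rw [hcells, List.map_append, List.map_append]
  refine List.rel_append (List.rel_append ?_ ?_) ?_
  · rw [hzero, List.forall₂_map_right_iff, List.forall₂_same]
    exact fun c _ => List.mem_singleton_self c
  · have h2 (d : Fin 7) (hd : d ∈ [(3 : Fin 7), 4, 5]) :
        placement x (d, 2) ∈ [24, 96, 132].map fun e => ((d : ℕ), 2, e) :=
      List.mem_map.2 ⟨_, outerMask_two_mem hx (hoff2 d hd).1 (hoff2 d hd).2, rfl⟩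
    exact .cons (h2 3 (by simp)) (.cons (h2 4 (by simp)) (.cons (h2 5 (by simp)) .nil))
  · rw [List.forall₂_map_left_iff, List.forall₂_map_right_iff, List.forall₂_same]
    have hfree : ∀ s ∈ freeCells, s ∈ cells ∧ s.1 ≠ 0 := by decide
    intro s hs
    obtain ⟨hcell, hs0⟩ := hfree s hs
    have hoff := (mem_cells _ _).1 hcell
    refine List.mem_filter.2 ⟨List.mem_map.2 ⟨_, outerMask_mem_pairMasks hx hoff, rfl⟩, ?_⟩
    refine List.all_eq_true.2 fun c hc => ?_
    rw [← hzero] at hc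
    obtain ⟨s', hs', rfl⟩ := List.mem_map.1 hc
    have hoff' : ∀ s' ∈ [((0 : Fin 7), (2 : Fin 7)), (0, 4), (0, 5), (0, 6)],
        s'.2 ∉ fanoLine s'.1 ∧ s'.1 = 0 := by decide
    exact Nat.beq_eq.mpr (mask_and_mask hx (hoff' s' hs').1 hoff fun h =>
      hs0 ((congrArg Prod.fst h).symm.trans (hoff' s' hs').2))

theorem hasFewWords_placements (hx : IsNormal x) :
    hasFewWords (cells.map (placement x)).reverse = true := by
  have hnodup : cells.Nodup := by decide
  rw [← List.append_nil (List.reverse _)]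
  refine leaf_of_search (placement_mem_slots hx) search_hasFewWords (fun c _ => Nat.zero_and _) ?_
  refine List.pairwise_map.2 (hnodup.imp_of_mem fun {s s'} hs hs' hne => ?_)
  exact mask_and_mask hx ((mem_cells _ _).1 hs) ((mem_cells _ _).1 hs') hne

theorem testBit_blockMask {d : Fin 7} {γ : Fin 5} {p : Fin 15} :
    (blockMask x d γ).testBit p = decide (x p d = γ) :=
  Nat.testBit_ofBits_lt _ _ p.isLt

theorem eq_blockMask_iff {d : Fin 7} {γ : Fin 5} {b : ℕ} (hb : b < 2 ^ 15) :
    b = blockMask x d γ ↔ (∀ f : Fin 7, b.testBit f = decide (x (fano f) d = γ)) ∧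
      ∀ z : Fin 8, b.testBit (7 + z) = decide (x (outer z) d = γ) := by
  constructor
  · rintro rfl
    exact ⟨fun f => testBit_blockMask (p := fano f), fun z => testBit_blockMask (p := outer z)⟩
  · rintro ⟨hfano, houter⟩
    have hbit (p : Fin 15) : b.testBit p = decide (x p d = γ) :=
      Fin.addCases (m := 7) (n := 8) (motive := fun p => b.testBit p = decide (x p d = γ))
        hfano houter p
    refine Nat.eq_of_testBit_eq fun i => ?_
    by_cases hi : i < 15
    · exact (hbit ⟨i, hi⟩).trans testBit_blockMask.symm
    · rw [blockMask, Nat.testBit_ofBits_ge _ _ (not_lt.1 hi)]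
      exact Nat.testBit_lt_two_pow (hb.trans_le (Nat.pow_le_pow_right two_pos (not_lt.1 hi)))

theorem lineMask_eq_blockMask (hx : IsNormal x) (d : Fin 7) :
    1 <<< (d : ℕ) ||| 1 <<< ((d + 1) % 7 : ℕ) ||| 1 <<< ((d + 3) % 7 : ℕ) =
      blockMask x d (x (fano d) d) := by
  have hlt : ∀ d : Fin 7,
      1 <<< (d : ℕ) ||| 1 <<< ((d + 1) % 7 : ℕ) ||| 1 <<< ((d + 3) % 7 : ℕ) < 2 ^ 15 := by decide
  have hfano : ∀ d f : Fin 7,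
      (1 <<< (d : ℕ) ||| 1 <<< ((d + 1) % 7 : ℕ) ||| 1 <<< ((d + 3) % 7 : ℕ)).testBit f =
        decide (f ∈ fanoLine d) := by decide +kernel
  have houter : ∀ (d : Fin 7) (z : Fin 8),
      (1 <<< (d : ℕ) ||| 1 <<< ((d + 1) % 7 : ℕ) ||| 1 <<< ((d + 3) % 7 : ℕ)).testBit (7 + z) =
        false := by decide +kernel
  refine (eq_blockMask_iff (hlt d)).2 ⟨fun f => ?_, fun z => ?_⟩
  · have hd : d ∈ fanoLine d := by simp [fanoLine]
    rw [hfano, decide_eq_decide, hx.fano_eq_iff]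
    exact ⟨fun hf => Or.inr ⟨hf, hd⟩, fun h => h.elim (fun h => h ▸ hd) And.left⟩
  · rw [houter, eq_comm, decide_eq_false_iff_not]
    exact hx.outer_ne_line d z

theorem offLineMask_eq_blockMask (hx : IsNormal x) {d f : Fin 7} (hf : f ∉ fanoLine d) :
    1 <<< (f : ℕ) ||| outerMask x d f <<< 7 = blockMask x d (x (fano f) d) := by
  have hlt : 1 <<< (f : ℕ) ||| outerMask x d f <<< 7 < 2 ^ 15 := by
    refine Nat.or_lt_two_pow ?_ ?_
    · rw [Nat.one_shiftLeft]
      exact Nat.pow_lt_pow_right one_lt_two (by omega)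
    · rw [Nat.shiftLeft_eq]
      have := Nat.ofBits_lt_two_pow fun z : Fin 8 => decide (x (outer z) d = x (fano f) d)
      rw [outerMask]
      omega
  refine (eq_blockMask_iff hlt).2 ⟨fun g => ?_, fun z => ?_⟩
  · have hg : ¬ 7 ≤ (g : ℕ) := by omega
    rw [Nat.one_shiftLeft, Nat.testBit_or, Nat.testBit_two_pow, Nat.testBit_shiftLeft]
    simp [hx.fano_eq_iff, hf, hg, Fin.ext_iff, eq_comm]
  · have hfz : (1 <<< (f : ℕ)).testBit (7 + z) = false := by
      rw [Nat.one_shiftLeft, Nat.testBit_two_pow_of_ne (by omega)]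
    rw [Nat.testBit_or, hfz, Bool.false_or, Nat.testBit_shiftLeft, Nat.add_sub_cancel_left,
      outerMask, Nat.testBit_ofBits_lt _ _ z.isLt]
    simp

theorem blockMask_mem_dayBlocks (hx : IsNormal x) (d : Fin 7) (γ : Fin 5) :
    blockMask x d γ ∈ dayBlocks (cells.map (placement x)).reverse d := by
  obtain ⟨f, rfl⟩ := hx.exists_fano d γ
  by_cases hf : f ∈ fanoLine d
  · rw [hx.line d f hf, ← lineMask_eq_blockMask hx]
    exact List.mem_cons_self
  · rw [← offLineMask_eq_blockMask hx hf]
    refine List.mem_cons_of_mem _ (List.mem_map.2 ⟨placement x (d, f), ?_, rfl⟩)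
    exact List.mem_filter.2 ⟨List.mem_reverse.2 (List.mem_map_of_mem ((mem_cells d f).2 hf)),
      Nat.beq_refl _⟩

theorem blockMask_injective (hx : IsNormal x) (d : Fin 7) :
    Function.Injective (blockMask x d) := fun γ γ' h => by
  obtain ⟨f, rfl⟩ := hx.exists_fano d γ
  have hbit := testBit_blockMask (x := x) (d := d) (γ := x (fano f) d) (p := fano f)
  rw [h, testBit_blockMask] at hbit
  simpa using hbit

/-- The word `u` as a list of blocks, in the order of the members of `balancedWords`. -/
def maskWord (x : Fin 15 → Fin 7 → Fin 5) (u : Fin 7 → Fin 5) : List ℕ :=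
  ([3, 2, 1, 0, 6, 5, 4] : List (Fin 7)).map fun d => blockMask x d (u d)

theorem maskWord_injective (hx : IsNormal x) : Function.Injective (maskWord x) := fun u v h => by
  have hday : ∀ d : Fin 7, d ∈ [3, 2, 1, 0, 6, 5, 4] := by decide
  exact funext fun d => blockMask_injective hx d (List.map_inj_left.1 h d (hday d))

theorem deg_maskWord (u : Fin 7 → Fin 5) (p : Fin 15) : deg (maskWord x u) p = agree (x p) u := by
  simp only [deg, maskWord, List.countP_map, agree, card_filter, Fin.sum_univ_seven,
    List.countP_cons, List.countP_nil, Function.comp_apply, testBit_blockMask, decide_eq_true_eq]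
  ring

theorem deg_maskWord_of_le {u : Fin 7 → Fin 5} {p : ℕ} (hp : 15 ≤ p) :
    deg (maskWord x u) p = 0 := by
  simp only [deg, maskWord, List.countP_map, List.countP_eq_zero]
  intro d _
  simp [blockMask, Nat.testBit_ofBits_ge _ _ hp]

theorem odd_agree_zero (hx : IsNormal x) {u : Fin 7 → Fin 5}
    (hu : ∀ p ≠ 0, agree (x p) u = 0 ∨ agree (x p) u = 2) : Odd (agree (x 0) u) := by
  have hsum := hx.sum_agree u
  rw [← add_sum_erase univ _ (mem_univ 0)] at hsum
  have heven : Even (∑ p ∈ univ.erase 0, agree (x p) u) := even_sum _ fun p hp => by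
    rcases hu p (ne_of_mem_erase hp) with h | h <;> simp [h]
  rcases Nat.even_or_odd (agree (x 0) u) with h | h
  · exact absurd (hsum ▸ h.add heven) (by decide)
  · exact h

theorem maskWord_mem_wordsOf (hx : IsNormal x) {u : Fin 7 → Fin 5}
    (hu : ∀ p ≠ 0, agree (x p) u = 0 ∨ agree (x p) u = 2) :
    maskWord x u ∈ wordsOf (cells.map (placement x)).reverse := by
  let mask (d : Fin 7) : ℕ := blockMask x d (u d)
  have hmem (days : List (Fin 7)) : List.Forall₂ (· ∈ ·) (days.map mask)
      ((days.map Fin.val).map (dayBlocks (cells.map (placement x)).reverse)) := by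
    rw [List.map_map, List.forall₂_map_left_iff, List.forall₂_map_right_iff, List.forall₂_same]
    exact fun d _ => blockMask_mem_dayBlocks hx d (u d)
  have hdeg (p : ℕ) : deg ([0, 1, 2, 3].map mask ++ [4, 5, 6].map mask) p = deg (maskWord x u) p :=
    List.Perm.countP_eq _ (List.Perm.append (List.reverse_perm ([3, 2, 1, 0].map mask))
      (List.reverse_perm ([6, 5, 4].map mask)))
  refine mem_balancedWords (hmem [0, 1, 2, 3]) (hmem [4, 5, 6]) (fun p => ?_) fun p hp => ?_ <;>
    rw [hdeg]
  · by_cases hp : p < 15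
    · rw [deg_maskWord u ⟨p, hp⟩]
      by_cases hp0 : p = 0
      · subst hp0
        exact iff_of_true (odd_agree_zero hx hu) rfl
      · refine iff_of_false ?_ hp0
        rcases hu ⟨p, hp⟩ (mt (congrArg Fin.val) hp0) with h | h <;> rw [h] <;> decide
    · rw [deg_maskWord_of_le (not_lt.1 hp)]
      exact iff_of_false (by decide) (by omega)
  · rw [deg_maskWord u ⟨p, by have := hp.2; omega⟩]
    exact hu _ (mt (congrArg Fin.val) (by have := hp.1; simp; omega))

theorem card_le_length (hx : IsNormal x) {X : Finset (Fin 7 → Fin 5)} {L : List (List ℕ)}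
    (hX : ∀ u ∈ X, maskWord x u ∈ L) : #X ≤ L.length :=
  calc #X = #(X.image (maskWord x)) := (card_image_of_injective X (maskWord_injective hx)).symm
    _ ≤ #L.toFinset := card_le_card (image_subset_iff.2 fun u hu => List.mem_toFinset.2 (hX u hu))
    _ ≤ L.length := L.toFinset_card_le

theorem IsNormal.card_le_eight (hx : IsNormal x) {X : Finset (Fin 7 → Fin 5)}
    (hX : ∀ u ∈ X, ∀ p ≠ 0, agree (x p) u = 0 ∨ agree (x p) u = 2) : #X ≤ 8 :=
  (card_le_length hx fun u hu => maskWord_mem_wordsOf hx (hX u hu)).trans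
    (Nat.le_of_ble_eq_true (Bool.and_eq_true_iff.1 (hasFewWords_placements hx)).1)

theorem IsNormal.card_le_three (hx : IsNormal x) {X : Finset (Fin 7 → Fin 5)}
    (hX : ∀ u ∈ X, ∀ p ≠ 0, agree (x p) u = 0 ∨ agree (x p) u = 2)
    (hX0 : ∀ u ∈ X, agree (x 0) u = 1) : #X ≤ 3 :=
  (card_le_length hx fun u hu => List.mem_filter.2 ⟨maskWord_mem_wordsOf hx (hX u hu),
    Nat.beq_eq.mpr ((deg_maskWord u 0).trans (hX0 u hu))⟩).trans
    (Nat.le_of_ble_eq_true (Bool.and_eq_true_iff.1 (hasFewWords_placements hx)).2)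

end Normal

/-! ### Words against a Kirkman triple system -/

namespace IsKirkman

variable {P : Type*} [Fintype P] {x : P → Fin 7 → Fin 5} {A : Finset P} {p : P}
  {X : Finset (Fin 7 → Fin 5)}

theorem exists_odd_agree (hx : IsKirkman x) (heven : ∀ d γ, Even #{a ∈ A | x a d = γ})
    (u : Fin 7 → Fin 5) : ∃ p ∉ A, Odd (agree (x p) u) := by
  classical
  by_contra! hno
  have hsum : Even (∑ a ∈ A, agree (x a) u) := by
    simp only [agree, card_filter]
    rw [sum_comm]
    simp only [← card_filter]
    exact even_sum _ fun d _ => heven d (u d)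
  have hcompl : Even (∑ a ∈ Aᶜ, agree (x a) u) :=
    even_sum _ fun a ha => Nat.not_odd_iff_even.1 (hno a (mem_compl.1 ha))
  have := hsum.add hcompl
  rw [sum_add_sum_compl, hx.sum_agree] at this
  exact absurd this (by decide)

theorem card_le_eight_and_le_three (hx : IsKirkman x) (hA : A.Nonempty)
    (heven : ∀ d γ, Even #{a ∈ A | x a d = γ}) (hp : p ∉ A)
    (hX : ∀ u ∈ X, ∀ a ≠ p, agree (x a) u = 0 ∨ agree (x a) u = 2) :
    #X ≤ 8 ∧ ((∀ u ∈ X, agree (x p) u = 1) → #X ≤ 3) := by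
  obtain ⟨σ, δ, rfl, hnormal⟩ := hx.exists_isNormal hA heven hp
  have hagree (a : Fin 15) (u : Fin 7 → Fin 5) :
      agree (fun d => x (σ a) (δ d)) (u ∘ δ) = agree (x (σ a)) u :=
    card_equiv δ (by simp)
  let Y := X.image (· ∘ δ)
  have hY : ∀ v ∈ Y, ∀ a ≠ 0,
      agree (fun d => x (σ a) (δ d)) v = 0 ∨ agree (fun d => x (σ a) (δ d)) v = 2 := by
    intro v hv a ha
    obtain ⟨u, hu, rfl⟩ := mem_image.1 hv
    simpa only [hagree] using hX u hu (σ a) (σ.injective.ne ha)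
  have hcard : #Y = #X := card_image_of_injective _ δ.surjective.injective_comp_right
  rw [← hcard]
  refine ⟨hnormal.card_le_eight hY, fun h => hnormal.card_le_three hY fun v hv => ?_⟩
  obtain ⟨u, hu, rfl⟩ := mem_image.1 hv
  exact (hagree 0 u).trans (h u hu)

theorem odd_card_agree_eq_one (hx : IsKirkman x) {u : Fin 7 → Fin 5}
    (hu : ∀ a, agree (x a) u ≤ 2) : Odd #{a | agree (x a) u = 1} := by
  have hsum : ∑ a, agree (x a) u = #{a | agree (x a) u = 1} + 2 * #{a | agree (x a) u = 2} := by
    rw [card_filter, card_filter, mul_sum, ← sum_add_distrib]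
    refine sum_congr rfl fun a _ => ?_
    have := hu a
    split_ifs <;> omega
  rw [hx.sum_agree] at hsum
  rw [Nat.odd_iff]
  omega

theorem card_le_twentyOne (hx : IsKirkman x) (hX : ∀ u ∈ X, ∀ a, agree (x a) u ≤ 2)
    (hone : ∀ u ∈ X, #{a | agree (x a) u = 1} = 1) : #X ≤ 21 := by
  classical
  obtain ⟨A, hA, heven⟩ := hx.exists_even_set
  have hcover : X ⊆ Aᶜ.biUnion fun p => {u ∈ X | agree (x p) u = 1} := by
    intro u hu
    obtain ⟨p, hp, hodd⟩ := hx.exists_odd_agree heven u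
    refine mem_biUnion.2 ⟨p, mem_compl.2 hp, mem_filter.2 ⟨hu, ?_⟩⟩
    have := hX u hu p
    rw [Nat.odd_iff] at hodd
    omega
  have hthree : ∀ p ∈ Aᶜ, #{u ∈ X | agree (x p) u = 1} ≤ 3 := by
    intro p hp
    refine (hx.card_le_eight_and_le_three hA heven (mem_compl.1 hp) fun u hu a ha => ?_).2
      fun u hu => (mem_filter.1 hu).2
    obtain ⟨huX, hup⟩ := mem_filter.1 hu
    have hne : agree (x a) u ≠ 1 := fun h =>
      ha (card_le_one.1 (hone u huX).le a (by simpa using h) p (by simpa using hup))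
    have := hX u huX a
    omega
  calc #X ≤ #Aᶜ * 3 := (card_le_card hcover).trans (card_biUnion_le_card_mul _ _ 3 hthree)
    _ = 21 := by rw [card_compl, hx.card_points, hx.card_even_set hA heven]

theorem three_mul_card_le (hx : IsKirkman x) (hX : ∀ u ∈ X, ∀ a, agree (x a) u ≤ 2) :
    3 * #X ≤ ∑ u ∈ X, #{a | agree (x a) u = 1} + 42 := by
  have hfew : #{u ∈ X | #{a | agree (x a) u = 1} = 1} ≤ 21 :=
    hx.card_le_twentyOne (fun u hu => hX u (mem_filter.1 hu).1) fun u hu => (mem_filter.1 hu).2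
  have hthree : ∀ u ∈ X, 3 ≤ #{a | agree (x a) u = 1} +
      2 * (if #{a | agree (x a) u = 1} = 1 then 1 else 0) := by
    intro u hu
    have := Nat.odd_iff.1 (hx.odd_card_agree_eq_one (hX u hu))
    split_ifs <;> omega
  have hsum := sum_le_sum hthree
  rw [sum_add_distrib, ← mul_sum, ← card_filter, sum_const, smul_eq_mul] at hsum
  omega

theorem card_le_sum_add_eight [DecidableEq P] (hx : IsKirkman x)
    (hX : ∀ u ∈ X, ∀ a ≠ p, agree (x a) u ≤ 2) :
    #X ≤ ∑ u ∈ X, #{a | a ≠ p ∧ agree (x a) u = 1} + 8 := by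
  obtain ⟨A, hA, heven⟩ := hx.exists_even_set
  let Y := {u ∈ X | #{a | a ≠ p ∧ agree (x a) u = 1} = 0}
  have hY : ∀ u ∈ Y, ∀ a ≠ p, agree (x a) u = 0 ∨ agree (x a) u = 2 := by
    intro u hu a ha
    obtain ⟨huX, hzero⟩ := mem_filter.1 hu
    have hne : agree (x a) u ≠ 1 := fun h =>
      filter_eq_empty_iff.1 (card_eq_zero.1 hzero) (mem_univ a) ⟨ha, h⟩
    have := hX u huX a ha
    omega
  have hfew : #Y ≤ 8 := by
    by_cases hp : p ∈ A
    · refine (card_eq_zero.2 (eq_empty_of_forall_notMem fun u hu => ?_)).trans_le (Nat.zero_le 8)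
      obtain ⟨a, ha, hodd⟩ := hx.exists_odd_agree heven u
      rw [Nat.odd_iff] at hodd
      have := hY u hu a (ne_of_mem_of_not_mem hp ha).symm
      omega
    · exact (hx.card_le_eight_and_le_three hA heven hp hY).1
  have hone : ∀ u ∈ X, 1 ≤ #{a | a ≠ p ∧ agree (x a) u = 1} +
      if #{a | a ≠ p ∧ agree (x a) u = 1} = 0 then 1 else 0 := by
    intro u _
    split_ifs <;> omega
  have hsum := sum_le_sum hone
  rw [sum_add_distrib, ← card_filter, sum_const, smul_eq_mul, mul_one] at hsum
  exact hsum.trans (Nat.add_le_add_left hfew _)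

end IsKirkman

/-! ### Codes of length 8 and distance 6 -/

/-- A code of length 8 over a five-letter alphabet with minimum distance at least 6. -/
def IsCode (C : Finset (Fin 8 → Fin 5)) : Prop :=
  ∀ u ∈ C, ∀ v ∈ C, u ≠ v → agree u v ≤ 2

/-- The words of `C` with symbol `γ` in coordinate `j`. -/
def block (C : Finset (Fin 8 → Fin 5)) (j : Fin 8) (γ : Fin 5) : Finset (Fin 8 → Fin 5) :=
  {u ∈ C | u j = γ}

/-- The pairs in `D × E` that agree in exactly one coordinate. A block of `C` is close to a Kirkman
triple system when few pairs of its words are of this kind. -/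
def oncePairs (D E : Finset (Fin 8 → Fin 5)) : Finset ((Fin 8 → Fin 5) × (Fin 8 → Fin 5)) :=
  {p ∈ D ×ˢ E | agree p.1 p.2 = 1}

theorem isCode_of_le_hammingDist {C : Finset (Fin 8 → Fin 5)}
    (hC : ∀ u ∈ C, ∀ v ∈ C, u ≠ v → 6 ≤ hammingDist u v) : IsCode C := by
  intro u hu v hv huv
  have hdist := hC u hu v hv huv
  have hsum : agree u v + hammingDist u v = 8 :=
    card_filter_add_card_filter_not (s := univ) fun i => u i = v i
  omega

theorem card_oncePairs (D E : Finset (Fin 8 → Fin 5)) :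
    #(oncePairs D E) = ∑ u ∈ D, #{v ∈ E | agree u v = 1} := by
  simp only [oncePairs, card_filter, sum_product]

theorem agree_eq_add_agree_succAbove (j : Fin 8) (u v : Fin 8 → Fin 5) :
    agree u v = (if u j = v j then 1 else 0) + agree (u ∘ j.succAbove) (v ∘ j.succAbove) := by
  simp only [agree, card_filter, Fin.sum_univ_succAbove _ j, Function.comp_apply]

theorem sum_card_block (C : Finset (Fin 8 → Fin 5)) (j : Fin 8) : ∑ γ, #(block C j γ) = #C :=
  (card_eq_sum_card_fiberwise (f := fun u : Fin 8 → Fin 5 => u j) (t := univ) (by simp)).symm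

section Block

variable {C : Finset (Fin 8 → Fin 5)} {j : Fin 8} {γ : Fin 5}

theorem mem_block {u : Fin 8 → Fin 5} : u ∈ block C j γ ↔ u ∈ C ∧ u j = γ :=
  mem_filter

theorem agree_eq_succ_of_mem_block {u v : Fin 8 → Fin 5} (hu : u ∈ block C j γ)
    (hv : v ∈ block C j γ) : agree u v = agree (u ∘ j.succAbove) (v ∘ j.succAbove) + 1 := by
  rw [agree_eq_add_agree_succAbove j, if_pos ((mem_block.1 hu).2.trans (mem_block.1 hv).2.symm),
    add_comm]

theorem IsCode.card_oncePairs_block (hC : IsCode C) (j : Fin 8) (γ : Fin 5) :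
    #(oncePairs (block C j γ) (block C j γ)) +
        ∑ i, ∑ β, #{u ∈ block C j γ | u (j.succAbove i) = β} ^ 2 =
      #(block C j γ) ^ 2 + 6 * #(block C j γ) := by
  set D := block C j γ
  have hrow : ∀ u ∈ D, #{v ∈ D | agree u v = 1} +
      ∑ v ∈ D, agree (u ∘ j.succAbove) (v ∘ j.succAbove) = #D + 6 := by
    intro u hu
    have hpair : ∀ v ∈ D.erase u, (if agree u v = 1 then 1 else 0) +
        agree (u ∘ j.succAbove) (v ∘ j.succAbove) = 1 := by
      intro v hv
      obtain ⟨hvu, hvD⟩ := mem_erase.1 hv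
      have hle := hC u (mem_block.1 hu).1 v (mem_block.1 hvD).1 hvu.symm
      rw [agree_eq_succ_of_mem_block hu hvD] at hle ⊢
      split_ifs <;> omega
    rw [card_filter, ← sum_add_distrib, ← add_sum_erase D _ hu, sum_congr rfl hpair, agree_self,
      agree_self, sum_const, card_erase_of_mem hu, Fintype.card_fin, Fintype.card_fin]
    have : 0 < #D := card_pos.2 ⟨u, hu⟩
    norm_num
    omega
  have hcount := sum_sq_card_fiber (fun u i => u (j.succAbove i)) D
  rw [card_oncePairs, hcount, ← sum_add_distrib]
  refine (sum_congr rfl hrow).trans ?_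
  rw [sum_const, smul_eq_mul]
  ring

/-- The least sum of the squares of five natural numbers with sum `m`, attained when each of them
is `m / 5` or `m / 5 + 1`. -/
def minSumSq (m : ℕ) : ℕ := 5 * (m / 5) ^ 2 + (2 * (m / 5) + 1) * (m % 5)

theorem minSumSq_le (f : Fin 5 → ℕ) : minSumSq (∑ γ, f γ) ≤ ∑ γ, f γ ^ 2 := by
  rw [minSumSq]
  have hdiv := Nat.div_add_mod (∑ γ, f γ) 5
  generalize (∑ γ, f γ) / 5 = k at *
  generalize (∑ γ, f γ) % 5 = r at *
  have hterm (γ : Fin 5) : (2 * k + 1) * (f γ : ℤ) ≤ f γ ^ 2 + k * (k + 1) := by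
    have : 0 ≤ ((f γ : ℤ) - k) * (f γ - k - 1) := by
      rcases le_or_gt (f γ : ℤ) k with h | h
      · exact mul_nonneg_of_nonpos_of_nonpos (by omega) (by omega)
      · exact mul_nonneg (by omega) (by omega)
    linarith
  have hsum := sum_le_sum fun γ (_ : γ ∈ univ) => hterm γ
  rw [← mul_sum, sum_add_distrib, ← Nat.cast_sum, ← hdiv, sum_const, card_univ, Fintype.card_fin,
    nsmul_eq_mul] at hsum
  zify at hsum ⊢
  linarith

theorem minSumSq_card_le (D : Finset (Fin 8 → Fin 5)) (i : Fin 8) :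
    minSumSq #D ≤ ∑ β, #{u ∈ D | u i = β} ^ 2 :=
  (congrArg minSumSq (sum_card_block D i)).ge.trans (minSumSq_le _)

/-- An upper bound for the number of pairs counted by `oncePairs` in a block of size `m`. -/
def pairBound (m : ℕ) : ℕ := m ^ 2 + 6 * m - 7 * minSumSq m

theorem seven_mul_minSumSq_le (D : Finset (Fin 8 → Fin 5)) (j : Fin 8) :
    7 * minSumSq #D ≤ ∑ i, ∑ β, #{u ∈ D | u (j.succAbove i) = β} ^ 2 := by
  simpa using card_nsmul_le_sum univ _ _ fun i _ => minSumSq_card_le D (j.succAbove i)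

theorem IsCode.card_oncePairs_block_le (hC : IsCode C) (j : Fin 8) (γ : Fin 5) :
    #(oncePairs (block C j γ) (block C j γ)) ≤ pairBound #(block C j γ) := by
  have hcount := hC.card_oncePairs_block j γ
  have hsq := seven_mul_minSumSq_le (block C j γ) j
  rw [pairBound]
  omega

theorem IsCode.card_block_le_fifteen (hC : IsCode C) (j : Fin 8) (γ : Fin 5) :
    #(block C j γ) ≤ 15 := by
  have hcount := hC.card_oncePairs_block j γ
  have hsq := seven_mul_minSumSq_le (block C j γ) j
  have hmin : #(block C j γ) ^ 2 ≤ 5 * minSumSq #(block C j γ) := by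
    generalize #(block C j γ) = m
    have hdiv := Nat.div_add_mod m 5
    have hmod : m % 5 ≤ 4 := by omega
    rw [minSumSq]
    generalize m / 5 = k at *
    generalize m % 5 = r at *
    subst hdiv
    nlinarith
  nlinarith

theorem IsCode.oncePairs_eq_empty (hC : IsCode C) (htight : pairBound #(block C j γ) = 0) :
    oncePairs (block C j γ) (block C j γ) = ∅ := by
  simpa [htight] using hC.card_oncePairs_block_le j γ

theorem IsCode.sum_sq_eq_minSumSq (hC : IsCode C) (htight : pairBound #(block C j γ) = 0)
    (i : Fin 7) : ∑ β, #{u ∈ block C j γ | u (j.succAbove i) = β} ^ 2 =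
      minSumSq #(block C j γ) := by
  have hle (i : Fin 7) := minSumSq_card_le (block C j γ) (j.succAbove i)
  have hcount := hC.card_oncePairs_block j γ
  have hsq := seven_mul_minSumSq_le (block C j γ) j
  rw [pairBound] at htight
  refine ((sum_eq_sum_iff_of_le fun i _ => hle i).1 ?_ i (mem_univ i)).symm
  rw [sum_const, card_univ, Fintype.card_fin, smul_eq_mul]
  omega

end Block

/-- Triples `(k₁₅, k₁₄, c)` such that `c` bounds the number of pairs counted by `oncePairs` within
the five blocks of a coordinate of a 65-word code, provided that at most `k₁₅` of these blocks have
size 15 and at most `k₁₄` have size 14. -/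
def columnBounds : List (ℕ × ℕ × ℕ) :=
  [(5, 5, 40), (1, 5, 26), (0, 5, 22), (0, 2, 16), (0, 1, 12)]

theorem sum_pairBound_le {m : Fin 5 → ℕ} (hm : ∀ γ, m γ ≤ 15) (hsum : ∑ γ, m γ = 65)
    {k₁₅ k₁₄ c : ℕ} (hc : (k₁₅, k₁₄, c) ∈ columnBounds)
    (h₁₅ : #{γ | m γ = 15} ≤ k₁₅) (h₁₄ : #{γ | m γ = 14} ≤ k₁₄) : ∑ γ, pairBound (m γ) ≤ c := by
  have hsearch : ∀ e ∈ Nat.antidiagonalTuple 5 10,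
      ∀ t ∈ columnBounds,
        #{γ | 15 - e γ = 15} ≤ t.1 → #{γ | 15 - e γ = 14} ≤ t.2.1 →
          ∑ γ, pairBound (15 - e γ) ≤ t.2.2 := by
    decide +kernel
  have hmem : (fun γ => 15 - m γ) ∈ Nat.antidiagonalTuple 5 10 := by
    rw [Nat.mem_antidiagonalTuple, sum_tsub_distrib _ fun γ _ => hm γ, hsum]
    rfl
  have hinv (γ : Fin 5) : 15 - (15 - m γ) = m γ := Nat.sub_sub_self (hm γ)
  simpa only [hinv, h₁₅, h₁₄, forall_const] using hsearch _ hmem _ hc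

/-- The pairs of words of `C` that agree in exactly one coordinate, and differ in coordinate `j`. -/
def crossPairs (C : Finset (Fin 8 → Fin 5)) (j : Fin 8) :
    Finset ((Fin 8 → Fin 5) × (Fin 8 → Fin 5)) :=
  {p ∈ oncePairs C C | p.1 j ≠ p.2 j}

section Cross

variable {C : Finset (Fin 8 → Fin 5)}

theorem mem_crossPairs {j : Fin 8} {p : (Fin 8 → Fin 5) × (Fin 8 → Fin 5)} :
    p ∈ crossPairs C j ↔ (p.1 ∈ C ∧ p.2 ∈ C) ∧ agree p.1 p.2 = 1 ∧ p.1 j ≠ p.2 j := by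
  simp only [crossPairs, oncePairs, mem_filter, mem_product, and_assoc]

theorem card_crossPairs_le (C : Finset (Fin 8 → Fin 5)) (j : Fin 8) :
    #(crossPairs C j) ≤ ∑ i, ∑ γ,
      #(oncePairs (block C (j.succAbove i) γ) (block C (j.succAbove i) γ)) := by
  have hcover : crossPairs C j ⊆ univ.biUnion fun i => univ.biUnion fun γ =>
      oncePairs (block C (j.succAbove i) γ) (block C (j.succAbove i) γ) := by
    intro p hp
    obtain ⟨⟨hu, hv⟩, hone, hj⟩ := mem_crossPairs.1 hp
    obtain ⟨i, hi⟩ := card_pos.1 (hone.symm ▸ one_pos : 0 < agree p.1 p.2)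
    have hagree : p.1 i = p.2 i := (mem_filter.1 hi).2
    obtain ⟨i, rfl⟩ := Fin.exists_succAbove_eq (x := i) (y := j) (by rintro rfl; exact hj hagree)
    simp only [mem_biUnion, mem_univ, true_and, oncePairs, mem_filter, mem_product, mem_block]
    exact ⟨i, _, ⟨⟨hu, rfl⟩, hv, hagree.symm⟩, hone⟩
  exact (card_le_card hcover).trans <| card_biUnion_le.trans <|
    sum_le_sum fun i _ => card_biUnion_le

theorem IsCode.card_crossPairs_le (hC : IsCode C) (hcard : #C = 65) (j : Fin 8)
    {k₁₅ k₁₄ c : ℕ} (hc : (k₁₅, k₁₄, c) ∈ columnBounds)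
    (h₁₅ : ∀ i, #{γ | #(block C i γ) = 15} ≤ k₁₅) (h₁₄ : ∀ i, #{γ | #(block C i γ) = 14} ≤ k₁₄) :
    #(crossPairs C j) ≤ 7 * c := by
  have hcolumn (i : Fin 8) : ∑ γ, #(oncePairs (block C i γ) (block C i γ)) ≤ c :=
    (sum_le_sum fun γ _ => hC.card_oncePairs_block_le i γ).trans <|
      sum_pairBound_le (hC.card_block_le_fifteen i) ((sum_card_block C i).trans hcard) hc (h₁₅ i)
        (h₁₄ i)
  refine (KirkmanCode.card_crossPairs_le C j).trans ?_
  simpa using sum_le_card_nsmul univ _ _ fun i _ => hcolumn (j.succAbove i)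

/-- The words of `C` whose symbol in coordinate `j` either lies outside `S` or comes after `α`. For
`α ∈ S` these words avoid `block C j α`, and letting `α` run over `S` pairs the words of each such
block with all words outside it without counting any unordered pair twice. -/
def later (C : Finset (Fin 8 → Fin 5)) (j : Fin 8) (S : Finset (Fin 5)) (α : Fin 5) :
    Finset (Fin 8 → Fin 5) :=
  {u ∈ C | u j ∈ S → α < u j}

theorem two_mul_sum_card_oncePairs_le (C : Finset (Fin 8 → Fin 5)) (j : Fin 8)
    (S : Finset (Fin 5)) :
    2 * ∑ α ∈ S, #(oncePairs (later C j S α) (block C j α)) ≤ #(crossPairs C j) := by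
  let T := S.biUnion fun α => oncePairs (later C j S α) (block C j α)
  have hT {p} : p ∈ T ↔ ((p.1 ∈ C ∧ p.2 ∈ C) ∧ agree p.1 p.2 = 1) ∧
      p.2 j ∈ S ∧ (p.1 j ∈ S → p.2 j < p.1 j) := by
    simp only [T, oncePairs, later, block, mem_biUnion, mem_filter, mem_product]
    grind
  have hcard : #T = ∑ α ∈ S, #(oncePairs (later C j S α) (block C j α)) := by
    refine card_biUnion fun α _ β _ hαβ => disjoint_left.2 fun p hα hβ => hαβ ?_
    simp only [oncePairs, mem_filter, mem_product, mem_block] at hα hβ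
    exact hα.1.2.2.symm.trans hβ.1.2.2
  have hdisj : Disjoint T (T.image Prod.swap) := by
    refine disjoint_left.2 fun p hp hq => ?_
    obtain ⟨q, hqT, rfl⟩ := mem_image.1 hq
    obtain ⟨-, hq₂, hq_lt⟩ := hT.1 hqT
    obtain ⟨-, hp₂, hp_lt⟩ := hT.1 hp
    exact lt_asymm (hq_lt hp₂) (hp_lt hq₂)
  have hsub : T ∪ T.image Prod.swap ⊆ crossPairs C j := by
    have hne {p} (hp : p ∈ T) : p.1 j ≠ p.2 j := fun h =>
      absurd ((hT.1 hp).2.2 (h ▸ (hT.1 hp).2.1)) (h ▸ lt_irrefl _)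
    refine union_subset (fun p hp => ?_) (image_subset_iff.2 fun p hp => ?_)
    · obtain ⟨⟨hC, hone⟩, -⟩ := hT.1 hp
      exact mem_crossPairs.2 ⟨hC, hone, hne hp⟩
    · obtain ⟨⟨hC, hone⟩, -⟩ := hT.1 hp
      exact mem_crossPairs.2 ⟨hC.symm, (agree_comm _ _).trans hone, (hne hp).symm⟩
  rw [← hcard, two_mul]
  nth_rewrite 2 [← card_image_of_injective T Prod.swap_injective]
  rw [← card_union_of_disjoint hdisj]
  exact card_le_card hsub

theorem two_mul_sum_card_later (j : Fin 8) {S : Finset (Fin 5)} {m : ℕ}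
    (hm : ∀ α ∈ S, #(block C j α) = m) :
    2 * ∑ α ∈ S, #(later C j S α) + m * (#S ^ 2 + #S) = 2 * #S * #C := by
  have hlater : ∀ α ∈ S, #(later C j S α) + m * #{β ∈ S | β ≤ α} = #C := by
    intro α _
    have hcompl : #{u ∈ C | ¬(u j ∈ S → α < u j)} = m * #{β ∈ S | β ≤ α} := by
      rw [mul_comm, ← smul_eq_mul, ← sum_const,
        ← sum_congr rfl fun β hβ => hm β (mem_filter.1 hβ).1]
      refine Eq.trans ?_ (sum_card_fiberwise_eq_card_filter C {β ∈ S | β ≤ α} fun u => u j).symm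
      simp only [mem_filter, Classical.not_imp, not_lt]
    rw [← hcompl]
    exact card_filter_add_card_filter_not _
  have htriangle : ∀ S : Finset (Fin 5), 2 * ∑ α ∈ S, #{β ∈ S | β ≤ α} = #S ^ 2 + #S := by
    decide +kernel
  have hsum := sum_congr rfl hlater
  rw [sum_add_distrib, ← mul_sum, sum_const, smul_eq_mul] at hsum
  rw [← htriangle]
  linarith

end Cross

/-! ### Blocks of size 15 and 14 -/

theorem eq_three_of_sum_sq {f : Fin 5 → ℕ} (hsum : ∑ γ, f γ = 15) (hsq : ∑ γ, f γ ^ 2 ≤ 45)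
    (γ : Fin 5) : f γ = 3 := by
  have hzero : ∑ γ, ((f γ : ℤ) - 3) ^ 2 ≤ 0 := by
    zify at hsum hsq
    simp only [sub_sq, sum_add_distrib, sum_sub_distrib, ← sum_mul, ← mul_sum, hsum, sum_const,
      card_univ, Fintype.card_fin]
    norm_num
    linarith
  have hterm := single_le_sum (f := fun γ => ((f γ : ℤ) - 3) ^ 2) (fun γ _ => sq_nonneg _)
    (mem_univ γ)
  have := pow_eq_zero_iff two_ne_zero |>.1 (le_antisymm (hterm.trans hzero) (sq_nonneg _))
  omega

theorem exists_add_ite_eq_three {f : Fin 5 → ℕ} (hsum : ∑ γ, f γ = 14)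
    (hsq : ∑ γ, f γ ^ 2 = 40) : ∃ β, ∀ γ, f γ + (if β = γ then 1 else 0) = 3 := by
  obtain ⟨β, -, hβ⟩ : ∃ β ∈ univ, f β < 3 := exists_lt_of_sum_lt (by rw [hsum]; decide)
  refine ⟨β, fun γ => eq_three_of_sum_sq (f := fun γ => f γ + if β = γ then 1 else 0) ?_ ?_ γ⟩
  · rw [sum_add_distrib, hsum, sum_ite_eq, if_pos (mem_univ β)]
  · simp only [add_sq, sum_add_distrib, hsq, mul_ite, mul_one, mul_zero, ite_pow, one_pow,
      zero_pow two_ne_zero, sum_ite_eq, if_pos (mem_univ β)]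
    omega

theorem card_filter_subtype {β : Type*} (D : Finset β) (p : β → Prop) [DecidablePred p] :
    #{a : D | p a} = #{u ∈ D | p u} := by
  simp only [card_filter, sum_coe_sort D fun u => if p u then 1 else 0]

theorem card_filter_option {β : Type*} [Fintype β] (p : Option β → Prop) [DecidablePred p] :
    #{a | p a} = #{b | p (some b)} + if p none then 1 else 0 := by
  rw [card_filter, Fintype.sum_option, card_filter, add_comm]

section LargeBlock

variable {C : Finset (Fin 8 → Fin 5)} {j : Fin 8} {α : Fin 5}

theorem IsCode.agree_succAbove_eq_one (hC : IsCode C)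
    (hempty : oncePairs (block C j α) (block C j α) = ∅) {u v : Fin 8 → Fin 5}
    (hu : u ∈ block C j α) (hv : v ∈ block C j α) (huv : u ≠ v) :
    agree (u ∘ j.succAbove) (v ∘ j.succAbove) = 1 := by
  have hle := hC u (mem_block.1 hu).1 v (mem_block.1 hv).1 huv
  have hne : agree u v ≠ 1 := fun h =>
    eq_empty_iff_forall_notMem.1 hempty (u, v) (mem_filter.2 ⟨mem_product.2 ⟨hu, hv⟩, h⟩)
  have := agree_eq_succ_of_mem_block hu hv
  omega

theorem IsCode.injOn_comp_succAbove (hC : IsCode C) (j : Fin 8) :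
    Set.InjOn (fun u : Fin 8 → Fin 5 => u ∘ j.succAbove) C := by
  intro u hu v hv (h : u ∘ j.succAbove = v ∘ j.succAbove)
  by_contra huv
  have hle := hC u hu v hv huv
  rw [agree_eq_add_agree_succAbove j, h, agree_self, Fintype.card_fin] at hle
  omega

theorem agree_succAbove_of_mem_block {a u : Fin 8 → Fin 5} (ha : a ∈ block C j α) (hu : u j ≠ α) :
    agree (a ∘ j.succAbove) (u ∘ j.succAbove) = agree u a := by
  rw [agree_comm u, agree_eq_add_agree_succAbove j a, (mem_block.1 ha).2, if_neg hu.symm, zero_add]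

theorem IsCode.agree_succAbove_le_two (hC : IsCode C) {a u : Fin 8 → Fin 5}
    (ha : a ∈ block C j α) (huC : u ∈ C) (hu : u j ≠ α) :
    agree (a ∘ j.succAbove) (u ∘ j.succAbove) ≤ 2 := by
  rw [agree_succAbove_of_mem_block ha hu]
  exact hC u huC a (mem_block.1 ha).1 (by rintro rfl; exact hu (mem_block.1 ha).2)

theorem card_agree_succAbove_eq_one {u : Fin 8 → Fin 5} (hu : u j ≠ α) :
    #{a : block C j α | agree (a ∘ j.succAbove) (u ∘ j.succAbove) = 1} =
      #{v ∈ block C j α | agree u v = 1} := by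
  rw [← card_filter_subtype (block C j α)]
  simp only [agree_succAbove_of_mem_block (Subtype.prop _) hu]

theorem IsCode.sum_card_agree_succAbove_eq_one (hC : IsCode C) {U : Finset (Fin 8 → Fin 5)}
    (hUC : U ⊆ C) (hU : ∀ u ∈ U, u j ≠ α) :
    ∑ w ∈ U.image (· ∘ j.succAbove), #{a : block C j α | agree (a ∘ j.succAbove) w = 1} =
      #(oncePairs U (block C j α)) := by
  rw [sum_image ((hC.injOn_comp_succAbove j).mono hUC), card_oncePairs]
  exact sum_congr rfl fun u hu => card_agree_succAbove_eq_one (hU u hu)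

theorem IsCode.card_image_succAbove (hC : IsCode C) {U : Finset (Fin 8 → Fin 5)} (hUC : U ⊆ C)
    (j : Fin 8) : #(U.image (· ∘ j.succAbove)) = #U :=
  card_image_of_injOn ((hC.injOn_comp_succAbove j).mono hUC)

theorem IsCode.isKirkman_block (hC : IsCode C) (hcard : #(block C j α) = 15) :
    IsKirkman fun a : block C j α => (a : Fin 8 → Fin 5) ∘ j.succAbove := by
  have htight : pairBound #(block C j α) = 0 := by rw [hcard]; rfl
  refine ⟨fun d γ => ?_, fun a b hab => ?_⟩
  · refine (card_filter_subtype _ fun u : Fin 8 → Fin 5 => u (j.succAbove d) = γ).trans ?_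
    refine eq_three_of_sum_sq ((sum_card_block (block C j α) (j.succAbove d)).trans hcard)
      ((hC.sum_sq_eq_minSumSq htight d).trans (congrArg minSumSq hcard)).le γ
  · exact hC.agree_succAbove_eq_one (hC.oncePairs_eq_empty htight) a.2 b.2
      fun h => hab (Subtype.ext h)

theorem IsCode.three_mul_card_le_card_oncePairs_add (hC : IsCode C) (hcard : #(block C j α) = 15)
    {U : Finset (Fin 8 → Fin 5)} (hUC : U ⊆ C) (hU : ∀ u ∈ U, u j ≠ α) :
    3 * #U ≤ #(oncePairs U (block C j α)) + 42 := by
  rw [← hC.sum_card_agree_succAbove_eq_one hUC hU, ← hC.card_image_succAbove hUC j]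
  refine (hC.isKirkman_block hcard).three_mul_card_le fun w hw a => ?_
  obtain ⟨u, hu, rfl⟩ := mem_image.1 hw
  exact hC.agree_succAbove_le_two a.2 (hUC hu) (hU u hu)

theorem IsCode.exists_missing_word (hC : IsCode C) (hcard : #(block C j α) = 14) :
    ∃ w : Fin 7 → Fin 5, ∀ i γ,
      #{u ∈ block C j α | u (j.succAbove i) = γ} + (if w i = γ then 1 else 0) = 3 := by
  have htight : pairBound #(block C j α) = 0 := by rw [hcard]; rfl
  refine Classical.skolem.1 fun i =>
    exists_add_ite_eq_three ((sum_card_block (block C j α) (j.succAbove i)).trans hcard)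
      ((hC.sum_sq_eq_minSumSq htight i).trans (congrArg minSumSq hcard))

theorem IsCode.agree_missing_word (hC : IsCode C) (hcard : #(block C j α) = 14)
    {w : Fin 7 → Fin 5}
    (hw : ∀ i γ, #{u ∈ block C j α | u (j.succAbove i) = γ} + (if w i = γ then 1 else 0) = 3)
    {a : Fin 8 → Fin 5} (ha : a ∈ block C j α) : agree w (a ∘ j.succAbove) = 1 := by
  have htight : pairBound #(block C j α) = 0 := by rw [hcard]; rfl
  have hrow : ∀ u ∈ (block C j α).erase a, agree (u ∘ j.succAbove) (a ∘ j.succAbove) = 1 :=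
    fun u hu => hC.agree_succAbove_eq_one (hC.oncePairs_eq_empty htight) (mem_of_mem_erase hu) ha
      (ne_of_mem_erase hu)
  have hsum : ∑ u ∈ block C j α, agree (u ∘ j.succAbove) (a ∘ j.succAbove) = 20 := by
    rw [← add_sum_erase _ _ ha, agree_self, sum_congr rfl hrow, sum_const, card_erase_of_mem ha,
      hcard]
    rfl
  have htotal := sum_congr rfl fun i (_ : i ∈ univ) => hw i (a (j.succAbove i))
  simp only [card_filter] at htotal
  rw [sum_add_distrib, sum_comm] at htotal
  simp only [← card_filter] at htotal
  simp only [agree, Function.comp_apply] at hsum ⊢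
  rw [hsum] at htotal
  norm_num at htotal
  omega

theorem IsCode.exists_isKirkman_option (hC : IsCode C) (hcard : #(block C j α) = 14) :
    ∃ w : Fin 7 → Fin 5, IsKirkman fun a : Option (block C j α) =>
      a.elim w fun a => (a : Fin 8 → Fin 5) ∘ j.succAbove := by
  have htight : pairBound #(block C j α) = 0 := by rw [hcard]; rfl
  obtain ⟨w, hw⟩ := hC.exists_missing_word hcard
  refine ⟨w, fun d γ => ?_, fun a b hab => ?_⟩
  · rw [card_filter_option]
    refine (congrArg₂ _ ?_ rfl).trans (hw d γ)
    exact card_filter_subtype _ fun u : Fin 8 → Fin 5 => u (j.succAbove d) = γ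
  · rcases a with _ | a <;> rcases b with _ | b
    · exact absurd rfl hab
    · exact hC.agree_missing_word hcard hw b.2
    · exact (agree_comm _ _).trans (hC.agree_missing_word hcard hw a.2)
    · exact hC.agree_succAbove_eq_one (hC.oncePairs_eq_empty htight) a.2 b.2
        fun h => hab (congrArg some (Subtype.ext h))

theorem IsCode.card_le_card_oncePairs_add_eight (hC : IsCode C) (hcard : #(block C j α) = 14)
    {U : Finset (Fin 8 → Fin 5)} (hUC : U ⊆ C) (hU : ∀ u ∈ U, u j ≠ α) :
    #U ≤ #(oncePairs U (block C j α)) + 8 := by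
  obtain ⟨w, hw⟩ := hC.exists_isKirkman_option hcard
  have hle := hw.card_le_sum_add_eight (p := none) (X := U.image (· ∘ j.succAbove)) <| by
    intro v hv a ha
    obtain ⟨u, hu, rfl⟩ := mem_image.1 hv
    obtain ⟨a, rfl⟩ := Option.ne_none_iff_exists'.1 ha
    exact hC.agree_succAbove_le_two a.2 (hUC hu) (hU u hu)
  simp only [card_filter_option] at hle
  rw [hC.card_image_succAbove hUC] at hle
  rw [← hC.sum_card_agree_succAbove_eq_one hUC hU]
  simpa using hle

end LargeBlock

/-! ### All blocks have size 13 -/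

section BlockSize

variable {C : Finset (Fin 8 → Fin 5)} {j : Fin 8}

theorem mul_le_card_crossPairs {a b m k : ℕ} (hcard : #C = 65)
    (hlower : ∀ α, #(block C j α) = m → ∀ U ⊆ C, (∀ u ∈ U, u j ≠ α) →
      a * #U ≤ #(oncePairs U (block C j α)) + b)
    (hk : k ≤ #{α | #(block C j α) = m}) :
    130 * a * k ≤ #(crossPairs C j) + 2 * b * k + a * m * (k ^ 2 + k) := by
  obtain ⟨S, hS, rfl⟩ := exists_subset_card_eq hk
  have hm : ∀ α ∈ S, #(block C j α) = m := fun α hα => (mem_filter.1 (hS hα)).2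
  have hlater : ∀ α ∈ S, a * #(later C j S α) ≤ #(oncePairs (later C j S α) (block C j α)) + b :=
    fun α hα => hlower α (hm α hα) _ (filter_subset _ _) fun u hu h =>
      ((mem_filter.1 hu).2 (h ▸ hα)).ne' h
  have hsum := sum_le_sum hlater
  rw [← mul_sum, sum_add_distrib, sum_const, smul_eq_mul] at hsum
  have hcross := two_mul_sum_card_oncePairs_le C j S
  have hcount := congrArg (a * ·) (two_mul_sum_card_later j hm)
  rw [hcard] at hcount
  linarith

theorem IsCode.card_fifteen_le_one (hC : IsCode C) (hcard : #C = 65) (j : Fin 8) :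
    #{γ | #(block C j γ) = 15} ≤ 1 := by
  by_contra! hk
  have hlower := mul_le_card_crossPairs (k := 2) hcard
    (fun α hα U => hC.three_mul_card_le_card_oncePairs_add hα) hk
  have hupper := hC.card_crossPairs_le hcard j (k₁₅ := 5) (k₁₄ := 5) (c := 40) (by decide)
    (fun i => card_le_univ _) fun i => card_le_univ _
  omega

theorem IsCode.card_block_ne_fifteen (hC : IsCode C) (hcard : #C = 65) (j : Fin 8) (γ : Fin 5) :
    #(block C j γ) ≠ 15 := by
  intro hγ
  have hlower := mul_le_card_crossPairs (k := 1) hcard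
    (fun α hα U => hC.three_mul_card_le_card_oncePairs_add hα)
    (card_pos.2 ⟨γ, mem_filter.2 ⟨mem_univ γ, hγ⟩⟩)
  have hupper := hC.card_crossPairs_le hcard j (k₁₅ := 1) (k₁₄ := 5) (c := 26) (by decide)
    (hC.card_fifteen_le_one hcard) fun i => card_le_univ _
  omega

theorem IsCode.card_fourteen_le_of (hC : IsCode C) (hcard : #C = 65) {k k₁₄ c : ℕ}
    (hc : (0, k₁₄, c) ∈ columnBounds) (h₁₄ : ∀ j, #{γ | #(block C j γ) = 14} ≤ k₁₄)
    (hk : 7 * c + 16 * (k + 1) + 14 * ((k + 1) ^ 2 + (k + 1)) < 130 * (k + 1)) (j : Fin 8) :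
    #{γ | #(block C j γ) = 14} ≤ k := by
  by_contra! hk'
  have hlower := mul_le_card_crossPairs (a := 1) (b := 8) (k := k + 1) hcard
    (fun α hα U hUC hU =>
      (one_mul #U).trans_le (hC.card_le_card_oncePairs_add_eight hα hUC hU)) hk'
  have hupper := hC.card_crossPairs_le hcard j hc
    (fun i => (card_filter_eq_zero_iff.2 fun γ _ => hC.card_block_ne_fifteen hcard i γ).le) h₁₄
  linarith

theorem IsCode.card_block_ne_fourteen (hC : IsCode C) (hcard : #C = 65) (j : Fin 8) (γ : Fin 5) :
    #(block C j γ) ≠ 14 := by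
  have htwo := hC.card_fourteen_le_of hcard (k := 2) (k₁₄ := 5) (c := 22) (by decide)
    (fun j => card_le_univ _) (by norm_num)
  have hone := hC.card_fourteen_le_of hcard (k := 1) (c := 16) (by decide) htwo (by norm_num)
  have hzero := hC.card_fourteen_le_of hcard (k := 0) (c := 12) (by decide) hone (by norm_num) j
  exact card_filter_eq_zero_iff.1 (Nat.le_zero.1 hzero) γ (mem_univ γ)

theorem IsCode.card_block_eq (hC : IsCode C) (hcard : #C = 65) (j : Fin 8) (γ : Fin 5) :
    #(block C j γ) = 13 := by
  have hle (α : Fin 5) : #(block C j α) ≤ 13 := by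
    have h₁₅ := hC.card_block_ne_fifteen hcard j α
    have h₁₄ := hC.card_block_ne_fourteen hcard j α
    have := hC.card_block_le_fifteen j α
    omega
  refine (sum_eq_sum_iff_of_le (g := fun _ => 13) fun α _ => hle α).1 ?_ γ (mem_univ γ)
  rw [sum_card_block, hcard]
  rfl

theorem IsCode.card_le_sixtyFive (hC : IsCode C) : #C ≤ 65 := by
  by_contra! hlt
  obtain ⟨D, hDC, hD⟩ := exists_subset_card_eq (Nat.succ_le_of_lt hlt)
  have hblock : ∀ w ∈ D, ∀ j γ, #(block (D.erase w) j γ) = 13 := by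
    intro w hw j γ
    have hcode : IsCode (D.erase w) := fun u hu v hv =>
      hC u (hDC (mem_of_mem_erase hu)) v (hDC (mem_of_mem_erase hv))
    exact hcode.card_block_eq (by rw [card_erase_of_mem hw, hD]) j γ
  obtain ⟨u, hu, v, hv, huv⟩ := one_lt_card.1 (by omega : 1 < #D)
  obtain ⟨j, hj⟩ := Function.ne_iff.1 huv
  have hu_block := hblock u hu j (u j)
  have hv_block := hblock v hv j (u j)
  rw [block, filter_erase, card_erase_of_mem (by simp [hu])] at hu_block
  rw [block, filter_erase, erase_eq_of_notMem (by simp [hj.symm])] at hv_block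
  omega

end BlockSize

end KirkmanCode

/-- `A_5(8,6) ≤ 65`: every `(8,6)_5`-code of cardinality 65 contains every symbol
exactly 13 times in each column, and consequently every code `C ⊆ (Fin 5)^8` with
minimum Hamming distance at least 6 has at most 65 elements. -/
theorem A5_8_6_le_65 :
    (∀ C : Finset (Fin 8 → Fin 5),
      (∀ u ∈ C, ∀ v ∈ C, u ≠ v → 6 ≤ hammingDist u v) → C.card = 65 →
      ∀ j : Fin 8, ∀ α : Fin 5, (C.filter (fun w => w j = α)).card = 13)
    ∧ (∀ C : Finset (Fin 8 → Fin 5),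
      (∀ u ∈ C, ∀ v ∈ C, u ≠ v → 6 ≤ hammingDist u v) → C.card ≤ 65) := by
  exact ⟨fun C hC hcard => (KirkmanCode.isCode_of_le_hammingDist hC).card_block_eq hcard,
    fun C hC => (KirkmanCode.isCode_of_le_hammingDist hC).card_le_sixtyFive⟩
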